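/- Let H be a quasi-Hopf algebra and (𝔄, ρ, Φ_ρ) a right H-comodule algebra. Then 𝒰 = H⊗𝔄 is a two-sided (𝔄,H)-Hopf module with structure maps h≻(h'⊗a) = hh'⊗a, (h⊗a)≺a' = h⊗aa', and ρ_𝒰(h⊗a) = ∑ h₁S⁻¹(q²_L X̃³₂ g²) ⊗ X̃¹ a⟨0⟩ ⊗ h₂S⁻¹(q¹_L X̃³₁ g¹) X̃² a⟨1⟩, where Φ_ρ = ∑X̃¹⊗X̃²⊗X̃³, q_L = ∑S(x¹)αx²⊗x³, and f⁻¹ = ∑g¹⊗g² is the inverse of the Drinfeld twist. -/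

import Mathlib

open TensorProduct Finset

noncomputable section

/-- A quasi-bialgebra in the sense of Drinfeld, together with chosen finite
Sweedler-type families representing the comultiplication and the reassociator. -/
structure QuasiBialgebra (k : Type*) [Field k] (H : Type*) [Ring H] [Algebra k H] where
  comul : H →ₐ[k] H ⊗[k] H
  counit : H →ₐ[k] k
  nD : ℕ
  D1 : H → ℕ → H
  D2 : H → ℕ → H
  hcomul : ∀ h, comul h = ∑ i ∈ range nD, D1 h i ⊗ₜ[k] D2 h i
  nP : ℕ
  X1 : ℕ → H
  X2 : ℕ → H
  X3 : ℕ → H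
  nQ : ℕ
  x1 : ℕ → H
  x2 : ℕ → H
  x3 : ℕ → H
  P_inv : ∑ s ∈ range nP, ∑ q ∈ range nQ,
      (X1 s * x1 q) ⊗ₜ[k] ((X2 s * x2 q) ⊗ₜ[k] (X3 s * x3 q)) =
      (1 : H) ⊗ₜ[k] ((1 : H) ⊗ₜ[k] (1 : H))
  inv_P : ∑ q ∈ range nQ, ∑ s ∈ range nP,
      (x1 q * X1 s) ⊗ₜ[k] ((x2 q * X2 s) ⊗ₜ[k] (x3 q * X3 s)) =
      (1 : H) ⊗ₜ[k] ((1 : H) ⊗ₜ[k] (1 : H))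
  coassoc : ∀ h : H,
    ∑ i ∈ range nD, ∑ j ∈ range nD,
      D1 h i ⊗ₜ[k] (D1 (D2 h i) j ⊗ₜ[k] D2 (D2 h i) j) =
    ∑ s ∈ range nP, ∑ i ∈ range nD, ∑ j ∈ range nD, ∑ q ∈ range nQ,
      (X1 s * D1 (D1 h i) j * x1 q) ⊗ₜ[k]
        ((X2 s * D2 (D1 h i) j * x2 q) ⊗ₜ[k] (X3 s * D2 h i * x3 q))
  counit_r : ∀ h : H, ∑ i ∈ range nD, counit (D2 h i) • D1 h i = h
  counit_l : ∀ h : H, ∑ i ∈ range nD, counit (D1 h i) • D2 h i = h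
  pentagon :
    ∑ p ∈ range nP, ∑ s ∈ range nP, ∑ l ∈ range nD, ∑ r ∈ range nP,
      (X1 s * X1 r) ⊗ₜ[k] ((X1 p * D1 (X2 s) l * X2 r) ⊗ₜ[k]
        ((X2 p * D2 (X2 s) l * X3 r) ⊗ₜ[k] (X3 p * X3 s))) =
    ∑ p ∈ range nP, ∑ s ∈ range nP, ∑ l ∈ range nD, ∑ j ∈ range nD,
      (X1 p * D1 (X1 s) j) ⊗ₜ[k] ((X2 p * D2 (X1 s) j) ⊗ₜ[k]
        ((D1 (X3 p) l * X2 s) ⊗ₜ[k] (D2 (X3 p) l * X3 s)))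
  normal : ∑ s ∈ range nP, counit (X2 s) • (X1 s ⊗ₜ[k] X3 s) = (1 : H) ⊗ₜ[k] (1 : H)

/-- A quasi-Hopf algebra: a quasi-bialgebra with an anti-automorphism `S`
and elements `aE = α`, `bE = β` satisfying the antipode axioms. -/
structure QuasiHopfAlgebra (k : Type*) [Field k] (H : Type*) [Ring H] [Algebra k H]
    extends QuasiBialgebra k H where
  S : H →ₗ[k] H
  Sinv : H →ₗ[k] H
  S_Sinv : ∀ h, S (Sinv h) = h
  Sinv_S : ∀ h, Sinv (S h) = h
  S_one : S 1 = 1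
  S_mul : ∀ g h : H, S (g * h) = S h * S g
  aE : H
  bE : H
  antip_l : ∀ h, ∑ i ∈ range nD, S (D1 h i) * aE * D2 h i = counit h • aE
  antip_r : ∀ h, ∑ i ∈ range nD, D1 h i * bE * S (D2 h i) = counit h • bE
  antip_X : ∑ s ∈ range nP, X1 s * bE * S (X2 s) * aE * X3 s = 1
  antip_x : ∑ q ∈ range nQ, S (x1 q) * aE * x2 q * bE * S (x3 q) = 1

/-- The Drinfeld twist `f` of a quasi-Hopf algebra, given by families `f₁ ⊗ f₂`
with inverse `g₁ ⊗ g₂`, together with its defining formula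
`f = ∑ (S⊗S)(Δᵒᵖ(x¹)) γ Δ(x²βS(x³))`, `γ = ∑ S(A²)αA³ ⊗ S(A¹)αA⁴`,
`∑A¹⊗A²⊗A³⊗A⁴ = (Φ⊗1)(Δ⊗id⊗id)(Φ⁻¹)`. -/
structure DrinfeldTwist {k : Type*} [Field k] {H : Type*} [Ring H] [Algebra k H]
    (QH : QuasiHopfAlgebra k H) where
  nf : ℕ
  f1 : ℕ → H
  f2 : ℕ → H
  g1 : ℕ → H
  g2 : ℕ → H
  f_inv : ∑ t ∈ range nf, ∑ u ∈ range nf,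
      (f1 t * g1 u) ⊗ₜ[k] (f2 t * g2 u) = (1 : H) ⊗ₜ[k] (1 : H)
  inv_f : ∑ u ∈ range nf, ∑ t ∈ range nf,
      (g1 u * f1 t) ⊗ₜ[k] (g2 u * f2 t) = (1 : H) ⊗ₜ[k] (1 : H)
  h_f : ∑ t ∈ range nf, f1 t ⊗ₜ[k] f2 t =
    ∑ j ∈ range QH.nQ, ∑ l ∈ range QH.nD, ∑ p ∈ range QH.nP, ∑ j' ∈ range QH.nQ,
      ∑ l' ∈ range QH.nD, ∑ l'' ∈ range QH.nD,
      (QH.S (QH.D2 (QH.x1 j) l) *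
          (QH.S (QH.X2 p * QH.D2 (QH.x1 j') l') * QH.aE * (QH.X3 p * QH.x2 j')) *
          QH.D1 (QH.x2 j * QH.bE * QH.S (QH.x3 j)) l'') ⊗ₜ[k]
        (QH.S (QH.D1 (QH.x1 j) l) *
          (QH.S (QH.X1 p * QH.D1 (QH.x1 j') l') * QH.aE * QH.x3 j') *
          QH.D2 (QH.x2 j * QH.bE * QH.S (QH.x3 j)) l'')

/-- A right `H`-comodule algebra over a quasi-bialgebra, with Sweedler families. -/
structure RightComoduleAlgebra {k : Type*} [Field k] {H : Type*} [Ring H] [Algebra k H]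
    (QB : QuasiBialgebra k H) (A : Type*) [Ring A] [Algebra k A] where
  rho : A →ₐ[k] A ⊗[k] H
  nR : ℕ
  r0 : A → ℕ → A
  r1 : A → ℕ → H
  hrho : ∀ a, rho a = ∑ i ∈ range nR, r0 a i ⊗ₜ[k] r1 a i
  nP : ℕ
  P1 : ℕ → A
  P2 : ℕ → H
  P3 : ℕ → H
  nQ : ℕ
  Q1 : ℕ → A
  Q2 : ℕ → H
  Q3 : ℕ → H
  P_inv : ∑ s ∈ range nP, ∑ q ∈ range nQ,
      (P1 s * Q1 q) ⊗ₜ[k] ((P2 s * Q2 q) ⊗ₜ[k] (P3 s * Q3 q)) =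
      (1 : A) ⊗ₜ[k] ((1 : H) ⊗ₜ[k] (1 : H))
  inv_P : ∑ q ∈ range nQ, ∑ s ∈ range nP,
      (Q1 q * P1 s) ⊗ₜ[k] ((Q2 q * P2 s) ⊗ₜ[k] (Q3 q * P3 s)) =
      (1 : A) ⊗ₜ[k] ((1 : H) ⊗ₜ[k] (1 : H))
  rca1 : ∀ a : A,
    ∑ s ∈ range nP, ∑ i ∈ range nR, ∑ j ∈ range nR,
      (P1 s * r0 (r0 a i) j) ⊗ₜ[k] ((P2 s * r1 (r0 a i) j) ⊗ₜ[k] (P3 s * r1 a i)) =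
    ∑ i ∈ range nR, ∑ l ∈ range QB.nD, ∑ s ∈ range nP,
      (r0 a i * P1 s) ⊗ₜ[k] ((QB.D1 (r1 a i) l * P2 s) ⊗ₜ[k] (QB.D2 (r1 a i) l * P3 s))
  rca2 :
    ∑ s ∈ range QB.nP, ∑ i ∈ range nP, ∑ l ∈ range QB.nD, ∑ j ∈ range nP,
      (P1 i * P1 j) ⊗ₜ[k] ((QB.X1 s * QB.D1 (P2 i) l * P2 j) ⊗ₜ[k]
        ((QB.X2 s * QB.D2 (P2 i) l * P3 j) ⊗ₜ[k] (QB.X3 s * P3 i))) =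
    ∑ i ∈ range nP, ∑ l ∈ range QB.nD, ∑ j ∈ range nP, ∑ u ∈ range nR,
      (P1 i * r0 (P1 j) u) ⊗ₜ[k] ((P2 i * r1 (P1 j) u) ⊗ₜ[k]
        ((QB.D1 (P3 i) l * P2 j) ⊗ₜ[k] (QB.D2 (P3 i) l * P3 j)))
  rca3 : ∀ a, ∑ i ∈ range nR, QB.counit (r1 a i) • r0 a i = a
  rca4a : ∑ s ∈ range nP, QB.counit (P2 s) • (P1 s ⊗ₜ[k] P3 s) = (1 : A) ⊗ₜ[k] (1 : H)
  rca4b : ∑ s ∈ range nP, QB.counit (P3 s) • (P1 s ⊗ₜ[k] P2 s) = (1 : A) ⊗ₜ[k] (1 : H)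

/-- A left `H`-comodule algebra over a quasi-bialgebra, with Sweedler families. -/
structure LeftComoduleAlgebra {k : Type*} [Field k] {H : Type*} [Ring H] [Algebra k H]
    (QB : QuasiBialgebra k H) (B : Type*) [Ring B] [Algebra k B] where
  lam : B →ₐ[k] H ⊗[k] B
  nL : ℕ
  l1 : B → ℕ → H
  l0 : B → ℕ → B
  hlam : ∀ b, lam b = ∑ i ∈ range nL, l1 b i ⊗ₜ[k] l0 b i
  nP : ℕ
  P1 : ℕ → H
  P2 : ℕ → H
  P3 : ℕ → B
  nQ : ℕ
  Q1 : ℕ → H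
  Q2 : ℕ → H
  Q3 : ℕ → B
  P_inv : ∑ s ∈ range nP, ∑ q ∈ range nQ,
      (P1 s * Q1 q) ⊗ₜ[k] ((P2 s * Q2 q) ⊗ₜ[k] (P3 s * Q3 q)) =
      (1 : H) ⊗ₜ[k] ((1 : H) ⊗ₜ[k] (1 : B))
  inv_P : ∑ q ∈ range nQ, ∑ s ∈ range nP,
      (Q1 q * P1 s) ⊗ₜ[k] ((Q2 q * P2 s) ⊗ₜ[k] (Q3 q * P3 s)) =
      (1 : H) ⊗ₜ[k] ((1 : H) ⊗ₜ[k] (1 : B))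
  lca1 : ∀ b : B,
    ∑ i ∈ range nL, ∑ l ∈ range nL, ∑ s ∈ range nP,
      (l1 b i * P1 s) ⊗ₜ[k] ((l1 (l0 b i) l * P2 s) ⊗ₜ[k] (l0 (l0 b i) l * P3 s)) =
    ∑ s ∈ range nP, ∑ i ∈ range nL, ∑ l ∈ range QB.nD,
      (P1 s * QB.D1 (l1 b i) l) ⊗ₜ[k] ((P2 s * QB.D2 (l1 b i) l) ⊗ₜ[k] (P3 s * l0 b i))
  lca2 :
    ∑ p ∈ range nP, ∑ s ∈ range nP, ∑ l ∈ range QB.nD, ∑ r ∈ range QB.nP,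
      (P1 s * QB.X1 r) ⊗ₜ[k] ((P1 p * QB.D1 (P2 s) l * QB.X2 r) ⊗ₜ[k]
        ((P2 p * QB.D2 (P2 s) l * QB.X3 r) ⊗ₜ[k] (P3 p * P3 s))) =
    ∑ p ∈ range nP, ∑ s ∈ range nP, ∑ j ∈ range QB.nD, ∑ l ∈ range nL,
      (P1 p * QB.D1 (P1 s) j) ⊗ₜ[k] ((P2 p * QB.D2 (P1 s) j) ⊗ₜ[k]
        ((l1 (P3 p) l * P2 s) ⊗ₜ[k] (l0 (P3 p) l * P3 s)))
  lca3 : ∀ b, ∑ i ∈ range nL, QB.counit (l1 b i) • l0 b i = b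
  lca4a : ∑ s ∈ range nP, QB.counit (P2 s) • (P1 s ⊗ₜ[k] P3 s) = (1 : H) ⊗ₜ[k] (1 : B)
  lca4b : ∑ s ∈ range nP, QB.counit (P1 s) • (P2 s ⊗ₜ[k] P3 s) = (1 : H) ⊗ₜ[k] (1 : B)

/-- An algebra in the monoidal category of left `H`-modules
(a left `H`-module algebra), on a carrier `V`. -/
structure LeftModuleAlgebra {k : Type*} [Field k] {H : Type*} [Ring H] [Algebra k H]
    (QB : QuasiBialgebra k H) (V : Type*) [AddCommMonoid V] [Module k V] where
  mul : V →ₗ[k] V →ₗ[k] V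
  one : V
  act : H →ₗ[k] V →ₗ[k] V
  act_one : ∀ v, act 1 v = v
  act_mul : ∀ g h v, act (g * h) v = act g (act h v)
  mul_one : ∀ v, mul v one = v
  one_mul : ∀ v, mul one v = v
  mul_assoc : ∀ u v w, mul (mul u v) w =
    ∑ s ∈ range QB.nP, mul (act (QB.X1 s) u) (mul (act (QB.X2 s) v) (act (QB.X3 s) w))
  act_mul_mul : ∀ h u v, act h (mul u v) =
    ∑ i ∈ range QB.nD, mul (act (QB.D1 h i) u) (act (QB.D2 h i) v)
  act_unit : ∀ h, act h one = QB.counit h • one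

/-- The right action `φ ↦ h ⇀ φ`, `(h ⇀ φ)(h') = φ(h'h)`. -/
def rA (k : Type*) [Field k] {H : Type*} [Ring H] [Algebra k H] (h : H) :
    Module.Dual k H →ₗ[k] Module.Dual k H :=
  LinearMap.lcomp k k (LinearMap.mulRight k h)

/-- The left action `φ ↦ φ ↼ h`, `(φ ↼ h)(h') = φ(hh')`. -/
def lA (k : Type*) [Field k] {H : Type*} [Ring H] [Algebra k H] (h : H) :
    Module.Dual k H →ₗ[k] Module.Dual k H :=
  LinearMap.lcomp k k (LinearMap.mulLeft k h)

/-- Convolution product on the dual of a "coalgebra" with comultiplication `DC`. -/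
def convC {k : Type*} [Field k] {C : Type*} [AddCommGroup C] [Module k C]
    (DC : C →ₗ[k] C ⊗[k] C) (φ ψ : Module.Dual k C) : Module.Dual k C :=
  (TensorProduct.lid k k).toLinearMap ∘ₗ (TensorProduct.map φ ψ) ∘ₗ DC

/-- A two-sided `(𝔄, H)`-Hopf module. -/
structure TwoSidedHopfModule {k : Type*} [Field k] {H : Type*} [Ring H] [Algebra k H]
    (QB : QuasiBialgebra k H) {A : Type*} [Ring A] [Algebra k A]
    (CA : RightComoduleAlgebra QB A) (M : Type*) [AddCommGroup M] [Module k M] where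
  ha : H →ₗ[k] M →ₗ[k] M
  ha_one : ∀ m, ha 1 m = m
  ha_mul : ∀ g h m, ha (g * h) m = ha g (ha h m)
  ra : A →ₗ[k] M →ₗ[k] M
  ra_one : ∀ m, ra 1 m = m
  ra_mul : ∀ a b m, ra (a * b) m = ra b (ra a m)
  ha_ra : ∀ h a m, ha h (ra a m) = ra a (ha h m)
  rho : M →ₗ[k] M ⊗[k] H
  counit_rho : ∀ m,
    (TensorProduct.rid k M) ((TensorProduct.map LinearMap.id QB.counit.toLinearMap) (rho m)) = m
  coassoc_rho : ∀ m,
    ∑ s ∈ range QB.nP,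
      (TensorProduct.map (ha (QB.X1 s))
        (TensorProduct.map (LinearMap.mulLeft k (QB.X2 s)) (LinearMap.mulLeft k (QB.X3 s))))
        ((TensorProduct.assoc k M H H) ((TensorProduct.map rho LinearMap.id) (rho m))) =
    ∑ j ∈ range CA.nP,
      (TensorProduct.map (ra (CA.P1 j))
        (TensorProduct.map (LinearMap.mulRight k (CA.P2 j)) (LinearMap.mulRight k (CA.P3 j))))
        ((TensorProduct.map LinearMap.id QB.comul.toLinearMap) (rho m))
  colin_l : ∀ h m, rho (ha h m) =
    ∑ i ∈ range QB.nD,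
      (TensorProduct.map (ha (QB.D1 h i)) (LinearMap.mulLeft k (QB.D2 h i))) (rho m)
  colin_r : ∀ a m, rho (ra a m) =
    ∑ i ∈ range CA.nR,
      (TensorProduct.map (ra (CA.r0 a i)) (LinearMap.mulRight k (CA.r1 a i))) (rho m)

/-- A right `(H^*, A)`-Hopf module over a left `H`-module algebra `A` (carrier `V`). -/
structure RelHopfModule {k : Type*} [Field k] {H : Type*} [Ring H] [Algebra k H]
    (QB : QuasiBialgebra k H) {V : Type*} [AddCommMonoid V] [Module k V]
    (MA : LeftModuleAlgebra QB V) (M : Type*) [AddCommGroup M] [Module k M] where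
  hb : H →ₗ[k] M →ₗ[k] M
  hb_one : ∀ m, hb 1 m = m
  hb_mul : ∀ g h m, hb (g * h) m = hb g (hb h m)
  rb : V →ₗ[k] M →ₗ[k] M
  rb_one : ∀ m, rb MA.one m = m
  rb_assoc : ∀ m u v, rb v (rb u m) =
    ∑ s ∈ range QB.nP, rb (MA.mul (MA.act (QB.X2 s) u) (MA.act (QB.X3 s) v)) (hb (QB.X1 s) m)
  hb_rb : ∀ h u m, hb h (rb u m) =
    ∑ i ∈ range QB.nD, rb (MA.act (QB.D2 h i) u) (hb (QB.D1 h i) m)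

/-- A right module over the (possibly nonassociative) algebra `(V, mul, one)`. -/
structure RightAlgModule (k : Type*) [Field k] {V : Type*} [AddCommMonoid V] [Module k V]
    (mul : V →ₗ[k] V →ₗ[k] V) (one : V) (N : Type*) [AddCommGroup N] [Module k N] where
  ract : V →ₗ[k] N →ₗ[k] N
  ract_one : ∀ n, ract one n = n
  ract_mul : ∀ u v n, ract (mul u v) n = ract v (ract u n)

/-- A left `H'`-comodule algebra structure on a carrier `V` equipped with a
(bilinear, possibly nonassociative) multiplication `mulV` and unit `oneV`. -/
structure LeftComoduleAlgebraS {k : Type*} [Field k] {H' : Type*} [Ring H'] [Algebra k H']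
    (QB : QuasiBialgebra k H') (V : Type*) [AddCommMonoid V] [Module k V]
    (mulV : V →ₗ[k] V →ₗ[k] V) (oneV : V) where
  lam : V →ₗ[k] H' ⊗[k] V
  nL : ℕ
  l1 : V → ℕ → H'
  l0 : V → ℕ → V
  hlam : ∀ v, lam v = ∑ i ∈ range nL, l1 v i ⊗ₜ[k] l0 v i
  lam_one : lam oneV = (1 : H') ⊗ₜ[k] oneV
  lam_mul : ∀ u v, lam (mulV u v) =
    ∑ i ∈ range nL, ∑ j ∈ range nL, (l1 u i * l1 v j) ⊗ₜ[k] mulV (l0 u i) (l0 v j)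
  nP : ℕ
  P1 : ℕ → H'
  P2 : ℕ → H'
  P3 : ℕ → V
  nQ : ℕ
  Q1 : ℕ → H'
  Q2 : ℕ → H'
  Q3 : ℕ → V
  P_inv : ∑ s ∈ range nP, ∑ q ∈ range nQ,
      (P1 s * Q1 q) ⊗ₜ[k] ((P2 s * Q2 q) ⊗ₜ[k] mulV (P3 s) (Q3 q)) =
      (1 : H') ⊗ₜ[k] ((1 : H') ⊗ₜ[k] oneV)
  inv_P : ∑ q ∈ range nQ, ∑ s ∈ range nP,
      (Q1 q * P1 s) ⊗ₜ[k] ((Q2 q * P2 s) ⊗ₜ[k] mulV (Q3 q) (P3 s)) =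
      (1 : H') ⊗ₜ[k] ((1 : H') ⊗ₜ[k] oneV)
  lca1 : ∀ v : V,
    ∑ i ∈ range nL, ∑ l ∈ range nL, ∑ s ∈ range nP,
      (l1 v i * P1 s) ⊗ₜ[k] ((l1 (l0 v i) l * P2 s) ⊗ₜ[k] mulV (l0 (l0 v i) l) (P3 s)) =
    ∑ s ∈ range nP, ∑ i ∈ range nL, ∑ l ∈ range QB.nD,
      (P1 s * QB.D1 (l1 v i) l) ⊗ₜ[k] ((P2 s * QB.D2 (l1 v i) l) ⊗ₜ[k] mulV (P3 s) (l0 v i))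
  lca2 :
    ∑ p ∈ range nP, ∑ s ∈ range nP, ∑ l ∈ range QB.nD, ∑ r ∈ range QB.nP,
      (P1 s * QB.X1 r) ⊗ₜ[k] ((P1 p * QB.D1 (P2 s) l * QB.X2 r) ⊗ₜ[k]
        ((P2 p * QB.D2 (P2 s) l * QB.X3 r) ⊗ₜ[k] mulV (P3 p) (P3 s))) =
    ∑ p ∈ range nP, ∑ s ∈ range nP, ∑ j ∈ range QB.nD, ∑ l ∈ range nL,
      (P1 p * QB.D1 (P1 s) j) ⊗ₜ[k] ((P2 p * QB.D2 (P1 s) j) ⊗ₜ[k]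
        ((l1 (P3 p) l * P2 s) ⊗ₜ[k] mulV (l0 (P3 p) l) (P3 s)))
  lca3 : ∀ v, ∑ i ∈ range nL, QB.counit (l1 v i) • l0 v i = v
  lca4a : ∑ s ∈ range nP, QB.counit (P2 s) • (P1 s ⊗ₜ[k] P3 s) = (1 : H') ⊗ₜ[k] oneV
  lca4b : ∑ s ∈ range nP, QB.counit (P1 s) • (P2 s ⊗ₜ[k] P3 s) = (1 : H') ⊗ₜ[k] oneV

/-- A right-left Doi-Hopf module over the quasi-bialgebra `QB'`, a left comodule
algebra (given by its carrier `V`, multiplication data and coaction families) and a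
module coalgebra `C` (given by its comultiplication `DC`, counit `eC` and right
`H'`-action `actC`). -/
structure DoiHopfModule {k : Type*} [Field k] {H' : Type*} [Ring H'] [Algebra k H']
    (QB' : QuasiBialgebra k H') {V : Type*} [AddCommMonoid V] [Module k V]
    (mulV : V →ₗ[k] V →ₗ[k] V) (oneV : V)
    (nL : ℕ) (l1 : V → ℕ → H') (l0 : V → ℕ → V)
    (nPl : ℕ) (Pl1 Pl2 : ℕ → H') (Pl3 : ℕ → V)
    {C : Type*} [AddCommGroup C] [Module k C]
    (DC : C →ₗ[k] C ⊗[k] C) (eC : C →ₗ[k] k) (actC : H' →ₗ[k] C →ₗ[k] C)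
    (N : Type*) [AddCommGroup N] [Module k N] where
  ract : V →ₗ[k] N →ₗ[k] N
  ract_one : ∀ n, ract oneV n = n
  ract_mul : ∀ u v n, ract (mulV u v) n = ract v (ract u n)
  rhoN : N →ₗ[k] C ⊗[k] N
  dh2 : ∀ n, (TensorProduct.lid k N) ((TensorProduct.map eC LinearMap.id) (rhoN n)) = n
  dh1 : ∀ n,
    (TensorProduct.assoc k C C N) ((TensorProduct.map DC LinearMap.id) (rhoN n)) =
    ∑ j ∈ range nPl,
      (TensorProduct.map (actC (Pl1 j)) (TensorProduct.map (actC (Pl2 j)) (ract (Pl3 j))))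
        ((TensorProduct.map LinearMap.id rhoN) (rhoN n))
  dh3 : ∀ v n, rhoN (ract v n) =
    ∑ w ∈ range nL, (TensorProduct.map (actC (l1 v w)) (ract (l0 v w))) (rhoN n)

/-- A right `H`-module coalgebra, with Sweedler families for the comultiplication. -/
structure RightModuleCoalgebra {k : Type*} [Field k] {H : Type*} [Ring H] [Algebra k H]
    (QB : QuasiBialgebra k H) (C : Type*) [AddCommGroup C] [Module k C] where
  act : H →ₗ[k] C →ₗ[k] C
  act_one : ∀ c, act 1 c = c
  act_mul : ∀ g h c, act (g * h) c = act h (act g c)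
  DC : C →ₗ[k] C ⊗[k] C
  nC : ℕ
  C1 : C → ℕ → C
  C2 : C → ℕ → C
  hDC : ∀ c, DC c = ∑ i ∈ range nC, C1 c i ⊗ₜ[k] C2 c i
  eC : C →ₗ[k] k
  counit_l : ∀ c, ∑ i ∈ range nC, eC (C1 c i) • C2 c i = c
  counit_r : ∀ c, ∑ i ∈ range nC, eC (C2 c i) • C1 c i = c
  rmc1 : ∀ c : C,
    ∑ i ∈ range nC, ∑ j ∈ range nC, ∑ q ∈ range QB.nQ,
      act (QB.x1 q) (C1 (C1 c i) j) ⊗ₜ[k]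
        (act (QB.x2 q) (C2 (C1 c i) j) ⊗ₜ[k] act (QB.x3 q) (C2 c i)) =
    ∑ i ∈ range nC, ∑ j ∈ range nC,
      C1 c i ⊗ₜ[k] (C1 (C2 c i) j ⊗ₜ[k] C2 (C2 c i) j)
  rmc2 : ∀ c h,
    ∑ i ∈ range nC, C1 (act h c) i ⊗ₜ[k] C2 (act h c) i =
    ∑ i ∈ range nC, ∑ l ∈ range QB.nD,
      act (QB.D1 h l) (C1 c i) ⊗ₜ[k] act (QB.D2 h l) (C2 c i)
  rmc3 : ∀ c h, eC (act h c) = eC c * QB.counit h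

/-- An `H`-bimodule coalgebra: a coalgebra in the monoidal category of
`(H,H)`-bimodules, with Sweedler families. -/
structure HBimoduleCoalgebra {k : Type*} [Field k] {H : Type*} [Ring H] [Algebra k H]
    (QB : QuasiBialgebra k H) (C : Type*) [AddCommGroup C] [Module k C] where
  lact : H →ₗ[k] C →ₗ[k] C
  lact_one : ∀ c, lact 1 c = c
  lact_mul : ∀ g h c, lact (g * h) c = lact g (lact h c)
  ract : H →ₗ[k] C →ₗ[k] C
  ract_one : ∀ c, ract 1 c = c
  ract_mul : ∀ g h c, ract (g * h) c = ract h (ract g c)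
  lact_ract : ∀ g h c, lact g (ract h c) = ract h (lact g c)
  DC : C →ₗ[k] C ⊗[k] C
  nC : ℕ
  C1 : C → ℕ → C
  C2 : C → ℕ → C
  hDC : ∀ c, DC c = ∑ i ∈ range nC, C1 c i ⊗ₜ[k] C2 c i
  eC : C →ₗ[k] k
  counit_l : ∀ c, ∑ i ∈ range nC, eC (C1 c i) • C2 c i = c
  counit_r : ∀ c, ∑ i ∈ range nC, eC (C2 c i) • C1 c i = c
  bmc1 : ∀ c : C,
    ∑ s ∈ range QB.nP, ∑ i ∈ range nC, ∑ j ∈ range nC, ∑ q ∈ range QB.nQ,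
      lact (QB.X1 s) (ract (QB.x1 q) (C1 (C1 c i) j)) ⊗ₜ[k]
        (lact (QB.X2 s) (ract (QB.x2 q) (C2 (C1 c i) j)) ⊗ₜ[k]
          lact (QB.X3 s) (ract (QB.x3 q) (C2 c i))) =
    ∑ i ∈ range nC, ∑ j ∈ range nC,
      C1 c i ⊗ₜ[k] (C1 (C2 c i) j ⊗ₜ[k] C2 (C2 c i) j)
  bmc2l : ∀ c h,
    ∑ i ∈ range nC, C1 (lact h c) i ⊗ₜ[k] C2 (lact h c) i =
    ∑ l ∈ range QB.nD, ∑ i ∈ range nC,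
      lact (QB.D1 h l) (C1 c i) ⊗ₜ[k] lact (QB.D2 h l) (C2 c i)
  bmc2r : ∀ c h,
    ∑ i ∈ range nC, C1 (ract h c) i ⊗ₜ[k] C2 (ract h c) i =
    ∑ l ∈ range QB.nD, ∑ i ∈ range nC,
      ract (QB.D1 h l) (C1 c i) ⊗ₜ[k] ract (QB.D2 h l) (C2 c i)
  bmc3l : ∀ c h, eC (lact h c) = QB.counit h * eC c
  bmc3r : ∀ c h, eC (ract h c) = eC c * QB.counit h

/-- An `H`-bicomodule algebra `(𝔸, λ, ρ, Φ_λ, Φ_ρ, Φ_{λ,ρ})`. -/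
structure BicomoduleAlgebra {k : Type*} [Field k] {H : Type*} [Ring H] [Algebra k H]
    (QB : QuasiBialgebra k H) (A : Type*) [Ring A] [Algebra k A] where
  rca : RightComoduleAlgebra QB A
  lca : LeftComoduleAlgebra QB A
  nO : ℕ
  O1 : ℕ → H
  O2 : ℕ → A
  O3 : ℕ → H
  nW : ℕ
  w1 : ℕ → H
  w2 : ℕ → A
  w3 : ℕ → H
  O_inv : ∑ v ∈ range nO, ∑ w ∈ range nW,
      (O1 v * w1 w) ⊗ₜ[k] ((O2 v * w2 w) ⊗ₜ[k] (O3 v * w3 w)) =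
      (1 : H) ⊗ₜ[k] ((1 : A) ⊗ₜ[k] (1 : H))
  inv_O : ∑ w ∈ range nW, ∑ v ∈ range nO,
      (w1 w * O1 v) ⊗ₜ[k] ((w2 w * O2 v) ⊗ₜ[k] (w3 w * O3 v)) =
      (1 : H) ⊗ₜ[k] ((1 : A) ⊗ₜ[k] (1 : H))
  bca1 : ∀ a : A,
    ∑ v ∈ range nO, ∑ r ∈ range rca.nR, ∑ l ∈ range lca.nL,
      (O1 v * lca.l1 (rca.r0 a r) l) ⊗ₜ[k]
        ((O2 v * lca.l0 (rca.r0 a r) l) ⊗ₜ[k] (O3 v * rca.r1 a r)) =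
    ∑ l ∈ range lca.nL, ∑ r ∈ range rca.nR, ∑ v ∈ range nO,
      (lca.l1 a l * O1 v) ⊗ₜ[k]
        ((rca.r0 (lca.l0 a l) r * O2 v) ⊗ₜ[k] (rca.r1 (lca.l0 a l) r * O3 v))
  bca2 :
    ∑ v ∈ range nO, ∑ v' ∈ range nO, ∑ l ∈ range lca.nL, ∑ j ∈ range lca.nP,
      (O1 v' * lca.P1 j) ⊗ₜ[k] ((O1 v * lca.l1 (O2 v') l * lca.P2 j) ⊗ₜ[k]
        ((O2 v * lca.l0 (O2 v') l * lca.P3 j) ⊗ₜ[k] (O3 v * O3 v'))) =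
    ∑ j ∈ range lca.nP, ∑ v ∈ range nO, ∑ i ∈ range QB.nD, ∑ r ∈ range rca.nR,
      (lca.P1 j * QB.D1 (O1 v) i) ⊗ₜ[k] ((lca.P2 j * QB.D2 (O1 v) i) ⊗ₜ[k]
        ((rca.r0 (lca.P3 j) r * O2 v) ⊗ₜ[k] (rca.r1 (lca.P3 j) r * O3 v)))
  bca3 :
    ∑ s ∈ range rca.nP, ∑ v ∈ range nO, ∑ r ∈ range rca.nR, ∑ v' ∈ range nO,
      (O1 v * O1 v') ⊗ₜ[k] ((rca.P1 s * rca.r0 (O2 v) r * O2 v') ⊗ₜ[k]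
        ((rca.P2 s * rca.r1 (O2 v) r * O3 v') ⊗ₜ[k] (rca.P3 s * O3 v))) =
    ∑ v ∈ range nO, ∑ i ∈ range QB.nD, ∑ s ∈ range rca.nP, ∑ l ∈ range lca.nL,
      (O1 v * lca.l1 (rca.P1 s) l) ⊗ₜ[k] ((O2 v * lca.l0 (rca.P1 s) l) ⊗ₜ[k]
        ((QB.D1 (O3 v) i * rca.P2 s) ⊗ₜ[k] (QB.D2 (O3 v) i * rca.P3 s)))

/-- A two-sided two-cosided `(H, 𝔸, C)`-Hopf module. -/
structure TwoSidedTwoCosided {k : Type*} [Field k] {H : Type*} [Ring H] [Algebra k H]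
    (QB : QuasiBialgebra k H) {A : Type*} [Ring A] [Algebra k A]
    (BA : BicomoduleAlgebra QB A) {C : Type*} [AddCommGroup C] [Module k C]
    (lactC ractC : H →ₗ[k] C →ₗ[k] C) (DC : C →ₗ[k] C ⊗[k] C) (eC : C →ₗ[k] k)
    (N : Type*) [AddCommGroup N] [Module k N]
    extends TwoSidedHopfModule QB BA.rca N where
  rhoC : N →ₗ[k] C ⊗[k] N
  counit_rhoC : ∀ n,
    (TensorProduct.lid k N) ((TensorProduct.map eC LinearMap.id) (rhoC n)) = n
  tstc1 : ∀ n,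
    ∑ s ∈ range QB.nP,
      (TensorProduct.map (lactC (QB.X1 s))
        (TensorProduct.map (lactC (QB.X2 s)) (ha (QB.X3 s))))
        ((TensorProduct.assoc k C C N) ((TensorProduct.map DC LinearMap.id) (rhoC n))) =
    ∑ j ∈ range BA.lca.nP,
      (TensorProduct.map (ractC (BA.lca.P1 j))
        (TensorProduct.map (ractC (BA.lca.P2 j)) (ra (BA.lca.P3 j))))
        ((TensorProduct.map LinearMap.id rhoC) (rhoC n))
  tstc2 : ∀ n,
    ∑ s ∈ range QB.nP,
      (TensorProduct.map (lactC (QB.X1 s))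
        (TensorProduct.map (ha (QB.X2 s)) (LinearMap.mulLeft k (QB.X3 s))))
        ((TensorProduct.assoc k C N H) ((TensorProduct.map rhoC LinearMap.id) (rho n))) =
    ∑ v ∈ range BA.nO,
      (TensorProduct.map (ractC (BA.O1 v))
        (TensorProduct.map (ra (BA.O2 v)) (LinearMap.mulRight k (BA.O3 v))))
        ((TensorProduct.map LinearMap.id rho) (rhoC n))
  tstc3 : ∀ h n, rhoC (ha h n) =
    ∑ i ∈ range QB.nD,
      (TensorProduct.map (lactC (QB.D1 h i)) (ha (QB.D2 h i))) (rhoC n)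
  tstc4 : ∀ a n, rhoC (ra a n) =
    ∑ l ∈ range BA.lca.nL,
      (TensorProduct.map (ractC (BA.lca.l1 a l)) (ra (BA.lca.l0 a l))) (rhoC n)

/-
Put `q = ∑ S(x¹) α x² ⊗ x³` and `W = ∑ S⁻¹(q² g²) ⊗ S⁻¹(q¹ g¹)`. The coaction is
`h ⊗ a ↦ Δ(h) Ω ρ(a)` for `Ω = ∑ Δ(S⁻¹(X̃³)) W (X̃¹ ⊗ X̃²)`, so it is compatible with both actions,
and its counit and coassociativity axioms only have to be checked at `1`. By the pentagon of the
comodule algebra they follow from two identities in `H`: `(id ⊗ ε)(W) = 1`, and `M(Φ) = (id ⊗ Δ)(W)`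
for `M(a ⊗ b ⊗ c) = (id ⊗ Δ)(Δ(S⁻¹(c))) Φ (Δ ⊗ id)(W) (W ⊗ 1) (1 ⊗ a ⊗ b)`.

The inverse twist enters through `W (S⁻¹(h) ⊗ 1) = ∑ Δ(S⁻¹(h₂)) W (1 ⊗ h₁)` and
`W (S⁻¹(α) ⊗ 1) = ∑ Δ(S⁻¹(α x³)) (x¹ ⊗ x²)`. An element `T` with
`T e(S⁻¹(h)) = ∑ D(S⁻¹(h₂)) T E(h₁)`, where the images of `e` and `E` commute, is determined by
`T e(S⁻¹(α))`, because `∑ S⁻¹(x² β S(x³)) S⁻¹(α) x¹ = 1`. The two sides of each of the identities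
satisfy such a relation with the same `D`, `e`, `E`, so it suffices to compare them after
multiplication by `S⁻¹(α)`, where they are evaluated by the pentagon of `H`.
-/

-- Multiplying in a four-fold tensor product needs deeply nested instance problems.
set_option maxSynthPendingDepth 4

open Algebra.TensorProduct (includeLeft includeRight)

namespace TensorLegs

section Sums

variable {α β γ δ M : Type*} [AddCommMonoid M] (s : Finset α) (t : Finset β) (u : Finset γ)
  (v : Finset δ)

theorem sum_rotate_three (F : α → β → γ → M) :
    ∑ a ∈ s, ∑ b ∈ t, ∑ c ∈ u, F a b c = ∑ b ∈ t, ∑ c ∈ u, ∑ a ∈ s, F a b c := by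
  rw [sum_comm]
  exact sum_congr rfl fun b _ => sum_comm

theorem sum_rotate_four (F : α → β → γ → δ → M) :
    ∑ a ∈ s, ∑ b ∈ t, ∑ c ∈ u, ∑ d ∈ v, F a b c d =
      ∑ b ∈ t, ∑ c ∈ u, ∑ d ∈ v, ∑ a ∈ s, F a b c d := by
  rw [sum_comm]
  exact sum_congr rfl fun b _ => sum_rotate_three _ _ _ _

theorem sum_swap_outer_inner (F : α → β → γ → δ → M) :
    ∑ a ∈ s, ∑ b ∈ t, ∑ c ∈ u, ∑ d ∈ v, F a b c d =
      ∑ d ∈ v, ∑ b ∈ t, ∑ c ∈ u, ∑ a ∈ s, F a b c d := by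
  rw [sum_rotate_four, ← sum_rotate_three]

theorem sum_rotate_four_three (F : α → β → γ → δ → M) :
    ∑ a ∈ s, ∑ b ∈ t, ∑ c ∈ u, ∑ d ∈ v, F a b c d =
      ∑ b ∈ t, ∑ d ∈ v, ∑ a ∈ s, ∑ c ∈ u, F a b c d := by
  rw [sum_rotate_four]
  exact sum_congr rfl fun b _ => sum_rotate_three _ _ _ _

end Sums

variable {k : Type*} [CommSemiring k]

section Induction

variable {A B C : Type*} [AddCommMonoid A] [Module k A] [AddCommMonoid B] [Module k B]
  [AddCommMonoid C] [Module k C]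

@[elab_as_elim]
theorem induction_on_three {p : A ⊗[k] (B ⊗[k] C) → Prop} (u : A ⊗[k] (B ⊗[k] C)) (zero : p 0)
    (tmul : ∀ a b c, p (a ⊗ₜ (b ⊗ₜ c))) (add : ∀ x y, p x → p y → p (x + y)) : p u := by
  induction u using TensorProduct.induction_on with
  | zero => exact zero
  | add x y hx hy => exact add x y hx hy
  | tmul a v =>
    induction v using TensorProduct.induction_on with
    | zero => simpa using zero
    | add x y hx hy => rw [tmul_add]; exact add _ _ hx hy
    | tmul b c => exact tmul a b c

end Induction

section Legs

variable {A B B' C D E : Type*} [Semiring A] [Algebra k A] [Semiring B] [Algebra k B]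
  [Semiring B'] [Algebra k B'] [Semiring C] [Algebra k C] [Semiring D] [Algebra k D]
  [Semiring E] [Algebra k E]

variable (A) in
/-- The action `id ⊗ δ` of an algebra map on all legs but the first. -/
def onTail (δ : B →ₐ[k] C) : A ⊗[k] B →ₐ[k] A ⊗[k] C :=
  Algebra.TensorProduct.map (AlgHom.id k A) δ

@[simp] theorem onTail_tmul (δ : B →ₐ[k] C) (a : A) (b : B) :
    onTail A δ (a ⊗ₜ b) = a ⊗ₜ δ b := rfl

variable (k B C D) in
/-- The inclusion `b ⊗ c ↦ b ⊗ (c ⊗ 1)`, appending a unit as last leg. -/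
def appendOne : B ⊗[k] C →ₐ[k] B ⊗[k] (C ⊗[k] D) :=
  onTail B includeLeft

@[simp] theorem appendOne_tmul (b : B) (c : C) :
    appendOne k B C D (b ⊗ₜ c) = b ⊗ₜ (c ⊗ₜ 1) := rfl

variable (D) in
/-- The action `δ ⊗ id` on the first leg of a map `δ` with two output legs, in right-nested form:
`a ⊗ d ↦ ∑ b ⊗ (c ⊗ d)` for `δ a = ∑ b ⊗ c`. -/
def onHead (δ : A →ₐ[k] B ⊗[k] C) : A ⊗[k] D →ₐ[k] B ⊗[k] (C ⊗[k] D) :=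
  (Algebra.TensorProduct.assoc k k k B C D).toAlgHom.comp
    (Algebra.TensorProduct.map δ (AlgHom.id k D))

theorem onHead_tmul (δ : A →ₐ[k] B ⊗[k] C) (a : A) (d : D) :
    onHead D δ (a ⊗ₜ d) = TensorProduct.assoc k B C D (δ a ⊗ₜ d) := rfl

theorem onHead_tmul_one (δ : A →ₐ[k] B ⊗[k] C) (a : A) :
    onHead D δ (a ⊗ₜ 1) = appendOne k B C D (δ a) := by
  rw [onHead_tmul]
  induction δ a using TensorProduct.induction_on with
  | zero => simp
  | add x y hx hy => simp only [map_add, add_tmul, hx, hy]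
  | tmul b c => rfl

theorem onHead_includeRight (δ : A →ₐ[k] B ⊗[k] C) (d : D) :
    onHead D δ (includeRight d) = includeRight (includeRight d : C ⊗[k] D) := by
  simp [onHead_tmul, Algebra.TensorProduct.one_def]

variable (k A B C D) in
/-- The reassociation `(A ⊗ (B ⊗ C)) ⊗ D ≃ A ⊗ (B ⊗ (C ⊗ D))` of four legs. -/
def assocFour : (A ⊗[k] (B ⊗[k] C)) ⊗[k] D ≃ₐ[k] A ⊗[k] (B ⊗[k] (C ⊗[k] D)) :=
  (Algebra.TensorProduct.assoc k k k A (B ⊗[k] C) D).trans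
    (Algebra.TensorProduct.congr AlgEquiv.refl (Algebra.TensorProduct.assoc k k k B C D))

@[simp] theorem assocFour_tmul (a : A) (b : B) (c : C) (d : D) :
    assocFour k A B C D ((a ⊗ₜ (b ⊗ₜ c)) ⊗ₜ d) = a ⊗ₜ (b ⊗ₜ (c ⊗ₜ d)) := rfl

theorem onTail_id (v : A ⊗[k] B) : onTail A (AlgHom.id k B) v = v :=
  AlgHom.congr_fun Algebra.TensorProduct.map_id v

theorem onTail_onTail (δ : B →ₐ[k] C) (δ' : C →ₐ[k] D) (v : A ⊗[k] B) :
    onTail A δ' (onTail A δ v) = onTail A (δ'.comp δ) v :=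
  (AlgHom.congr_fun (Algebra.TensorProduct.map_id_comp δ' δ) v).symm

theorem onTail_congr {δ δ' : B →ₐ[k] C} (h : ∀ b, δ b = δ' b) (v : A ⊗[k] B) :
    onTail A δ v = onTail A δ' v := by
  rw [AlgHom.ext h]

theorem onTail_eq_self {δ : B →ₐ[k] B} (h : ∀ b, δ b = b) (v : A ⊗[k] B) : onTail A δ v = v := by
  rw [onTail_congr (δ' := AlgHom.id k B) h, onTail_id]

theorem onHead_onTail_eq_assoc_map (Δ : A →ₐ[k] B ⊗[k] B') (Δ' : C →ₐ[k] D ⊗[k] E)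
    (v : A ⊗[k] C) :
    onHead (D ⊗[k] E) Δ (onTail A Δ' v) =
      Algebra.TensorProduct.assoc k k k B B' (D ⊗[k] E) (Algebra.TensorProduct.map Δ Δ' v) := by
  induction v using TensorProduct.induction_on with
  | zero => simp
  | add x y hx hy => simp only [map_add, hx, hy]
  | tmul a c => rfl

theorem onTail_onTail_onHead (δ : C →ₐ[k] D) (Δ : A →ₐ[k] B ⊗[k] B') (v : A ⊗[k] C) :
    onTail B (onTail B' δ) (onHead C Δ v) = onHead D Δ (onTail A δ v) := by
  induction v using TensorProduct.induction_on with
  | zero => simp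
  | add x y hx hy => simp only [map_add, hx, hy]
  | tmul a c =>
    simp only [onHead_tmul, onTail_tmul]
    induction Δ a using TensorProduct.induction_on with
    | zero => simp
    | add x y hx hy => simp only [map_add, add_tmul, hx, hy]
    | tmul x y => simp

theorem assocFour_onHead_tmul (Δ : A →ₐ[k] B ⊗[k] B') (v : A ⊗[k] C) (d : D) :
    assocFour k B B' C D (onHead C Δ v ⊗ₜ d) =
      onHead (C ⊗[k] D) Δ (TensorProduct.assoc k A C D (v ⊗ₜ d)) := by
  induction v using TensorProduct.induction_on with
  | zero => simp
  | add x y hx hy => simp only [map_add, add_tmul, hx, hy]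
  | tmul a c =>
    simp only [onHead_tmul, assoc_tmul]
    induction Δ a using TensorProduct.induction_on with
    | zero => simp
    | add x y hx hy => simp only [map_add, add_tmul, hx, hy]
    | tmul x y => simp

theorem assocFour_onTail_tmul (Δ : B →ₐ[k] C ⊗[k] D) (v : A ⊗[k] B) (e : E) :
    assocFour k A C D E (onTail A Δ v ⊗ₜ e) =
      onTail A (onHead E Δ) (TensorProduct.assoc k A B E (v ⊗ₜ e)) := by
  induction v using TensorProduct.induction_on with
  | zero => simp
  | add x y hx hy => simp only [map_add, add_tmul, hx, hy]
  | tmul a b => rfl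

theorem assocFour_tmul_one (v : A ⊗[k] (B ⊗[k] C)) :
    assocFour k A B C D (v ⊗ₜ 1) = onTail A (appendOne k B C D) v := by
  induction v using induction_on_three with
  | zero => simp
  | add x y hx hy => simp only [map_add, add_tmul, hx, hy]
  | tmul a b c => rfl

theorem commute_tmul_one_includeRight (a : A) (b : B) :
    Commute (a ⊗ₜ[k] (1 : B)) (includeRight b) := by
  simp [commute_iff_eq]

theorem commute_appendOne_includeRight (v : A ⊗[k] B) (c : C) :
    Commute (appendOne k A B C v) (includeRight (includeRight c : B ⊗[k] C)) := by
  induction v using TensorProduct.induction_on with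
  | zero => simp
  | add x y hx hy => rw [map_add]; exact hx.add_left hy
  | tmul a b => simp [commute_iff_eq]

end Legs

section Sandwich

variable {P P' Q Q' B : Type*} [Semiring P] [Algebra k P] [Semiring P'] [Algebra k P']
  [Semiring Q] [Algebra k Q] [Semiring Q'] [Algebra k Q'] [Semiring B] [Algebra k B]

/-- The linear map `p ⊗ q ↦ l p * x * r q`. For `l` antimultiplicative and `r` multiplicative
it is the right action of `P ⊗ Q` on `x`, and a left action in the opposite case. -/
def sandwich (l : P →ₗ[k] B) (x : B) (r : Q →ₗ[k] B) : P ⊗[k] Q →ₗ[k] B :=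
  LinearMap.mul' k B ∘ₗ TensorProduct.map (LinearMap.mulRight k x ∘ₗ l) r

@[simp] theorem sandwich_tmul (l : P →ₗ[k] B) (x : B) (r : Q →ₗ[k] B) (p : P) (q : Q) :
    sandwich l x r (p ⊗ₜ q) = l p * x * r q := rfl

theorem sandwich_zero_middle (l : P →ₗ[k] B) (r : Q →ₗ[k] B) (v : P ⊗[k] Q) :
    sandwich l 0 r v = 0 := by
  simp [sandwich, LinearMap.mulRight_zero_eq_zero]

theorem sandwich_add_middle (l : P →ₗ[k] B) (x y : B) (r : Q →ₗ[k] B) (v : P ⊗[k] Q) :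
    sandwich l (x + y) r v = sandwich l x r v + sandwich l y r v := by
  induction v using TensorProduct.induction_on with
  | zero => simp
  | add u v hu hv => simp only [map_add, hu, hv]; abel
  | tmul p q => simp [mul_add, add_mul]

theorem sandwich_smul_middle (l : P →ₗ[k] B) (c : k) (x : B) (r : Q →ₗ[k] B) (v : P ⊗[k] Q) :
    sandwich l (c • x) r v = c • sandwich l x r v := by
  induction v using TensorProduct.induction_on with
  | zero => simp
  | add u v hu hv => simp only [map_add, smul_add, hu, hv]
  | tmul p q => simp

theorem sandwich_map (l : P →ₗ[k] B) (x : B) (r : Q →ₗ[k] B) (f : P' →ₐ[k] P) (g : Q' →ₐ[k] Q)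
    (v : P' ⊗[k] Q') :
    sandwich l x r (Algebra.TensorProduct.map f g v) =
      sandwich (l ∘ₗ f.toLinearMap) x (r ∘ₗ g.toLinearMap) v := by
  induction v using TensorProduct.induction_on with
  | zero => simp
  | add u v hu hv => simp only [map_add, hu, hv]
  | tmul p q => rfl

theorem sandwich_mul {l : P →ₗ[k] B} {r : Q →ₗ[k] B} (hl : ∀ p p', l (p * p') = l p' * l p)
    (hr : ∀ q q', r (q * q') = r q * r q') (x : B) (v w : P ⊗[k] Q) :
    sandwich l x r (v * w) = sandwich l (sandwich l x r v) r w := by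
  induction v using TensorProduct.induction_on with
  | zero => simp [sandwich_zero_middle]
  | add u v hu hv => simp only [map_add, add_mul, sandwich_add_middle, hu, hv]
  | tmul p q =>
    induction w using TensorProduct.induction_on with
    | zero => simp
    | add u v hu hv => simp only [map_add, mul_add, hu, hv]
    | tmul p' q' => simp [hl, hr, mul_assoc]

theorem sandwich_mul_left {l : P →ₗ[k] B} {r : Q →ₗ[k] B}
    (hl : ∀ p p', l (p * p') = l p * l p') (hr : ∀ q q', r (q * q') = r q' * r q) (x : B)
    (v w : P ⊗[k] Q) :
    sandwich l x r (v * w) = sandwich l (sandwich l x r w) r v := by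
  induction w using TensorProduct.induction_on with
  | zero => simp [sandwich_zero_middle]
  | add u w hu hw => simp only [map_add, mul_add, sandwich_add_middle, hu, hw]
  | tmul p q =>
    induction v using TensorProduct.induction_on with
    | zero => simp
    | add u v hu hv => simp only [map_add, add_mul, hu, hv]
    | tmul p' q' => simp [hl, hr, mul_assoc]

theorem sandwich_tmul_one_mul {l : P →ₗ[k] B} (hl : ∀ p p', l (p * p') = l p * l p') (x : B)
    (r : Q →ₗ[k] B) (p : P) (w : P ⊗[k] Q) :
    sandwich l x r (p ⊗ₜ 1 * w) = l p * sandwich l x r w := by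
  induction w using TensorProduct.induction_on with
  | zero => simp
  | add u v hu hv => simp only [map_add, mul_add, hu, hv]
  | tmul p' q => simp [hl, mul_assoc]

theorem sandwich_mul_one_tmul {r : Q →ₗ[k] B} (hr : ∀ q q', r (q * q') = r q * r q')
    (l : P →ₗ[k] B) (x : B) (w : P ⊗[k] Q) (q : Q) :
    sandwich l x r (w * 1 ⊗ₜ q) = sandwich l x r w * r q := by
  induction w using TensorProduct.induction_on with
  | zero => simp
  | add u v hu hv => simp only [map_add, add_mul, hu, hv]
  | tmul p q' => simp [hr, mul_assoc]

end Sandwich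

section LTensor

variable {A B B' C : Type*} [Semiring A] [Algebra k A] [Semiring B] [Algebra k B] [Semiring B']
  [Algebra k B'] [Semiring C] [Algebra k C]

theorem lTensor_mul_onTail {F : B →ₗ[k] B'} {δ : C →ₐ[k] B} {η : C →ₐ[k] B'}
    (h : ∀ b c, F (b * δ c) = F b * η c) (z : A ⊗[k] B) (w : A ⊗[k] C) :
    F.lTensor A (z * onTail A δ w) = F.lTensor A z * onTail A η w := by
  induction z using TensorProduct.induction_on with
  | zero => simp
  | add x y hx hy => simp only [map_add, add_mul, hx, hy]
  | tmul a b =>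
    induction w using TensorProduct.induction_on with
    | zero => simp
    | add x y hx hy => simp only [map_add, mul_add, hx, hy]
    | tmul a' c => simp [h]

theorem lTensor_onTail_mul {F : B →ₗ[k] B'} {δ : C →ₐ[k] B} {η : C →ₐ[k] B'}
    (h : ∀ c b, F (δ c * b) = η c * F b) (w : A ⊗[k] C) (z : A ⊗[k] B) :
    F.lTensor A (onTail A δ w * z) = onTail A η w * F.lTensor A z := by
  induction z using TensorProduct.induction_on with
  | zero => simp
  | add x y hx hy => simp only [map_add, mul_add, hx, hy]
  | tmul a b =>
    induction w using TensorProduct.induction_on with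
    | zero => simp
    | add x y hx hy => simp only [map_add, add_mul, hx, hy]
    | tmul a' c => simp [h]

end LTensor

section SwapMap

variable {A B : Type*} [Semiring A] [Algebra k A] [Semiring B] [Algebra k B]

/-- The map `a ⊗ b ↦ f b ⊗ f a`, antimultiplicative when `f` is. -/
def swapMap (f : A →ₗ[k] B) : A ⊗[k] A →ₗ[k] B ⊗[k] B :=
  TensorProduct.map f f ∘ₗ (TensorProduct.comm k A A).toLinearMap

@[simp] theorem swapMap_tmul (f : A →ₗ[k] B) (a b : A) : swapMap f (a ⊗ₜ b) = f b ⊗ₜ f a := rfl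

theorem swapMap_mul {f : A →ₗ[k] B} (hf : ∀ a b, f (a * b) = f b * f a) (u v : A ⊗[k] A) :
    swapMap f (u * v) = swapMap f v * swapMap f u := by
  induction u using TensorProduct.induction_on with
  | zero => simp
  | add x y hx hy => simp only [map_add, add_mul, mul_add, hx, hy]
  | tmul a b =>
    induction v using TensorProduct.induction_on with
    | zero => simp
    | add x y hx hy => simp only [map_add, add_mul, mul_add, hx, hy]
    | tmul c d => simp [hf]

theorem swapMap_swapMap {f : A →ₗ[k] B} {g : B →ₗ[k] A} (h : ∀ a, g (f a) = a)
    (v : A ⊗[k] A) : swapMap g (swapMap f v) = v := by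
  induction v using TensorProduct.induction_on with
  | zero => simp
  | add x y hx hy => simp only [map_add, hx, hy]
  | tmul a b => simp [h]

end SwapMap

end TensorLegs

open TensorLegs

namespace QuasiBialgebra

variable {k : Type*} [Field k] {H : Type*} [Ring H] [Algebra k H] (QB : QuasiBialgebra k H)

/-- The reassociator `Φ`. -/
def reassoc : H ⊗[k] (H ⊗[k] H) :=
  ∑ s ∈ range QB.nP, QB.X1 s ⊗ₜ (QB.X2 s ⊗ₜ QB.X3 s)

/-- The inverse reassociator `Φ⁻¹`. -/
def reassocInv : H ⊗[k] (H ⊗[k] H) :=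
  ∑ q ∈ range QB.nQ, QB.x1 q ⊗ₜ (QB.x2 q ⊗ₜ QB.x3 q)

theorem reassoc_mul_reassocInv : QB.reassoc * QB.reassocInv = 1 := by
  rw [reassoc, reassocInv, Finset.sum_mul_sum]
  simpa [Algebra.TensorProduct.one_def] using QB.P_inv

theorem reassocInv_mul_reassoc : QB.reassocInv * QB.reassoc = 1 := by
  rw [reassoc, reassocInv, Finset.sum_mul_sum]
  simpa [Algebra.TensorProduct.one_def] using QB.inv_P

theorem isUnit_reassoc : IsUnit QB.reassoc :=
  ⟨⟨_, _, QB.reassoc_mul_reassocInv, QB.reassocInv_mul_reassoc⟩, rfl⟩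

theorem onTail_comul_comul (h : H) :
    onTail H QB.comul (QB.comul h) =
      QB.reassoc * onHead H QB.comul (QB.comul h) * QB.reassocInv := by
  have sweedler : onTail H QB.comul (QB.comul h) = ∑ i ∈ range QB.nD, ∑ j ∈ range QB.nD,
      QB.D1 h i ⊗ₜ[k] (QB.D1 (QB.D2 h i) j ⊗ₜ[k] QB.D2 (QB.D2 h i) j) := by
    simp [QB.hcomul, tmul_sum]
  rw [sweedler, QB.coassoc]
  simp only [reassoc, reassocInv, QB.hcomul, map_sum, onHead_tmul, sum_tmul, assoc_tmul,
    Algebra.TensorProduct.tmul_mul_tmul, Finset.sum_mul, Finset.mul_sum]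
  exact sum_swap_outer_inner _ _ _ _ _

theorem onTail_comul_mul_reassoc (h : H) :
    onTail H QB.comul (QB.comul h) * QB.reassoc = QB.reassoc * onHead H QB.comul (QB.comul h) := by
  rw [onTail_comul_comul, mul_assoc, reassocInv_mul_reassoc, mul_one]

theorem reassocInv_mul_onTail_comul (h : H) :
    QB.reassocInv * onTail H QB.comul (QB.comul h) =
      onHead H QB.comul (QB.comul h) * QB.reassocInv := by
  rw [onTail_comul_comul, mul_assoc, ← mul_assoc, reassocInv_mul_reassoc, one_mul]

theorem pentagon_reassoc :
    includeRight QB.reassoc * onTail H (onHead H QB.comul) QB.reassoc *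
        onTail H (appendOne k H H H) QB.reassoc =
      onTail H (onTail H QB.comul) QB.reassoc * onHead (H ⊗[k] H) QB.comul QB.reassoc := by
  have sweedler := QB.pentagon
  simp only [reassoc, QB.hcomul, map_sum, onTail_tmul, Algebra.TensorProduct.includeRight_apply,
    onHead_tmul, sum_tmul, tmul_sum, assoc_tmul, appendOne_tmul, Finset.sum_mul,
    Finset.mul_sum, Algebra.TensorProduct.tmul_mul_tmul, one_mul, mul_one]
  exact (sum_swap_outer_inner _ _ _ _ _).symm.trans
    (sweedler.trans (sum_rotate_four_three _ _ _ _ _))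

section Counit

variable {A B C : Type*} [Ring A] [Algebra k A] [Ring B] [Algebra k B] [Ring C] [Algebra k C]

variable (B) in
/-- The map `ε ⊗ id`. -/
def counitHead : H ⊗[k] B →ₐ[k] B :=
  (Algebra.TensorProduct.lid k B).toAlgHom.comp
    (Algebra.TensorProduct.map QB.counit (AlgHom.id k B))

variable (B) in
/-- The map `id ⊗ ε`. -/
def counitLast : B ⊗[k] H →ₐ[k] B :=
  (Algebra.TensorProduct.rid k k B).toAlgHom.comp
    (Algebra.TensorProduct.map (AlgHom.id k B) QB.counit)

@[simp] theorem counitHead_tmul (h : H) (b : B) :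
    QB.counitHead B (h ⊗ₜ b) = QB.counit h • b := rfl

@[simp] theorem counitLast_tmul (b : B) (h : H) :
    QB.counitLast B (b ⊗ₜ h) = QB.counit h • b := rfl

@[simp] theorem counitHead_comul (h : H) : QB.counitHead H (QB.comul h) = h := by
  simpa [QB.hcomul] using QB.counit_l h

@[simp] theorem counitLast_comul (h : H) : QB.counitLast H (QB.comul h) = h := by
  simpa [QB.hcomul] using QB.counit_r h

theorem counitHead_onTail (δ : B →ₐ[k] C) (v : H ⊗[k] B) :
    QB.counitHead C (onTail H δ v) = δ (QB.counitHead B v) := by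
  induction v using TensorProduct.induction_on with
  | zero => simp
  | add x y hx hy => simp only [map_add, hx, hy]
  | tmul h b => simp

theorem onTail_counitHead_onTail_onTail (δ : B →ₐ[k] C) (v : A ⊗[k] (H ⊗[k] B)) :
    onTail A (QB.counitHead C) (onTail A (onTail H δ) v) =
      onTail A δ (onTail A (QB.counitHead B) v) := by
  rw [onTail_onTail, onTail_onTail]
  exact onTail_congr (QB.counitHead_onTail δ) v

theorem counitHead_assoc_tmul (v : H ⊗[k] B) (c : C) :
    QB.counitHead (B ⊗[k] C) (TensorProduct.assoc k H B C (v ⊗ₜ c)) =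
      QB.counitHead B v ⊗ₜ c := by
  induction v using TensorProduct.induction_on with
  | zero => simp
  | add x y hx hy => simp only [map_add, add_tmul, hx, hy]
  | tmul h b => simp [smul_tmul']

theorem onTail_counitHead_assoc_tmul (v : B ⊗[k] H) (c : C) :
    onTail B (QB.counitHead C) (TensorProduct.assoc k B H C (v ⊗ₜ c)) =
      QB.counitLast B v ⊗ₜ c := by
  induction v using TensorProduct.induction_on with
  | zero => simp
  | add x y hx hy => simp only [map_add, add_tmul, hx, hy]
  | tmul h b => simp [smul_tmul]

@[simp] theorem counitHead_onHead_comul (v : H ⊗[k] B) :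
    QB.counitHead (H ⊗[k] B) (onHead B QB.comul v) = v := by
  induction v using TensorProduct.induction_on with
  | zero => simp
  | add x y hx hy => simp only [map_add, hx, hy]
  | tmul b c => rw [onHead_tmul, counitHead_assoc_tmul, counitHead_comul]

@[simp] theorem onTail_counitHead_onHead_comul (v : H ⊗[k] B) :
    onTail H (QB.counitHead B) (onHead B QB.comul v) = v := by
  induction v using TensorProduct.induction_on with
  | zero => simp
  | add x y hx hy => simp only [map_add, hx, hy]
  | tmul b c => rw [onHead_tmul, onTail_counitHead_assoc_tmul, counitLast_comul]

theorem onTail_counitHead_appendOne (v : B ⊗[k] H) :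
    onTail B (QB.counitHead C) (appendOne k B H C v) = QB.counitLast B v ⊗ₜ 1 := by
  induction v using TensorProduct.induction_on with
  | zero => simp
  | add x y hx hy => simp only [map_add, add_tmul, hx, hy]
  | tmul b c => simp [smul_tmul]

theorem onTail_counitLast_appendOne (v : A ⊗[k] B) :
    onTail A (QB.counitLast B) (appendOne k A B H v) = v := by
  rw [appendOne, onTail_onTail]
  exact onTail_eq_self (fun b => by simp) v

@[simp] theorem onTail_counitHead_reassoc : onTail H (QB.counitHead H) QB.reassoc = 1 := by
  rw [Algebra.TensorProduct.one_def, ← QB.normal]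
  simp [reassoc, tmul_smul]

@[simp] theorem counitHead_reassoc : QB.counitHead (H ⊗[k] H) QB.reassoc = 1 := by
  let δ := onTail H (QB.counitHead (H ⊗[k] H))
  have counit_pentagon := congrArg δ QB.pentagon_reassoc
  have first : δ (includeRight QB.reassoc) = 1 ⊗ₜ QB.counitHead (H ⊗[k] H) QB.reassoc := rfl
  have second : δ (onTail H (onHead H QB.comul) QB.reassoc) = QB.reassoc := by
    rw [onTail_onTail]
    exact onTail_eq_self QB.counitHead_onHead_comul _
  have third : δ (onTail H (appendOne k H H H) QB.reassoc) = 1 := by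
    rw [appendOne, QB.onTail_counitHead_onTail_onTail, onTail_counitHead_reassoc, map_one]
  have fourth : δ (onTail H (onTail H QB.comul) QB.reassoc) = 1 := by
    rw [QB.onTail_counitHead_onTail_onTail, onTail_counitHead_reassoc, map_one]
  rw [map_mul, map_mul, map_mul, first, second, third, fourth, one_mul, mul_one,
    QB.onTail_counitHead_onHead_comul] at counit_pentagon
  have one_tmul_counit := QB.isUnit_reassoc.mul_right_cancel
    (counit_pentagon.trans (one_mul _).symm)
  simpa using congrArg (QB.counitHead (H ⊗[k] H)) one_tmul_counit

@[simp] theorem onTail_counitLast_reassoc : onTail H (QB.counitLast H) QB.reassoc = 1 := by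
  let δ := onTail H (onTail H (QB.counitHead H))
  have counit_pentagon := congrArg δ QB.pentagon_reassoc
  have first : δ (includeRight QB.reassoc) = 1 :=
    congrArg includeRight QB.onTail_counitHead_reassoc
  have second : δ (onTail H (onHead H QB.comul) QB.reassoc) = QB.reassoc := by
    rw [onTail_onTail]
    exact onTail_eq_self QB.onTail_counitHead_onHead_comul _
  have third : δ (onTail H (appendOne k H H H) QB.reassoc) =
      appendOne k H H H (onTail H (QB.counitLast H) QB.reassoc) := by
    rw [onTail_onTail, appendOne, onTail_onTail]
    exact onTail_congr QB.onTail_counitHead_appendOne _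
  have fourth : δ (onTail H (onTail H QB.comul) QB.reassoc) = QB.reassoc := by
    rw [onTail_onTail]
    refine onTail_eq_self (fun v => ?_) _
    rw [AlgHom.comp_apply, onTail_onTail]
    exact onTail_eq_self QB.counitHead_comul v
  have fifth : δ (onHead (H ⊗[k] H) QB.comul QB.reassoc) = 1 := by
    rw [onTail_onTail_onHead, onTail_counitHead_reassoc, map_one]
  rw [map_mul, map_mul, map_mul, first, second, third, fourth, fifth, one_mul] at counit_pentagon
  have appendOne_counit := QB.isUnit_reassoc.mul_left_cancel counit_pentagon
  simpa [onTail_counitLast_appendOne] using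
    congrArg (onTail H (QB.counitLast H)) appendOne_counit

theorem map_reassoc_mul_map_reassocInv (φ : H ⊗[k] (H ⊗[k] H) →ₐ[k] B) :
    φ QB.reassoc * φ QB.reassocInv = 1 := by
  rw [← map_mul, reassoc_mul_reassocInv, map_one]

theorem map_reassocInv_mul_map_reassoc (φ : H ⊗[k] (H ⊗[k] H) →ₐ[k] B) :
    φ QB.reassocInv * φ QB.reassoc = 1 := by
  rw [← map_mul, reassocInv_mul_reassoc, map_one]

theorem map_reassocInv_eq_one {φ : H ⊗[k] (H ⊗[k] H) →ₐ[k] B} (h : φ QB.reassoc = 1) :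
    φ QB.reassocInv = 1 := by
  simpa [h] using QB.map_reassoc_mul_map_reassocInv φ

@[simp] theorem onTail_counitHead_reassocInv :
    onTail H (QB.counitHead H) QB.reassocInv = 1 :=
  QB.map_reassocInv_eq_one QB.onTail_counitHead_reassoc

@[simp] theorem counitHead_reassocInv : QB.counitHead (H ⊗[k] H) QB.reassocInv = 1 :=
  QB.map_reassocInv_eq_one QB.counitHead_reassoc

@[simp] theorem onTail_counitLast_reassocInv :
    onTail H (QB.counitLast H) QB.reassocInv = 1 :=
  QB.map_reassocInv_eq_one QB.onTail_counitLast_reassoc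

end Counit

section PentagonVariants

theorem pentagon_reassocInv :
    onTail H (appendOne k H H H) QB.reassoc * onHead (H ⊗[k] H) QB.comul QB.reassocInv *
        onTail H (onTail H QB.comul) QB.reassocInv =
      onTail H (onHead H QB.comul) QB.reassocInv * includeRight QB.reassocInv := by
  refine (left_inv_eq_right_inv
    (a := includeRight QB.reassoc * onTail H (onHead H QB.comul) QB.reassoc) ?_ ?_).symm
  · rw [mul_assoc, ← mul_assoc (includeRight QB.reassocInv), ← map_mul,
      QB.reassocInv_mul_reassoc, map_one, one_mul, map_reassocInv_mul_map_reassoc]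
  · rw [← mul_assoc, ← mul_assoc, QB.pentagon_reassoc, mul_assoc (onTail H (onTail H QB.comul) _),
      map_reassoc_mul_map_reassocInv, mul_one, map_reassoc_mul_map_reassocInv]

theorem pentagon_reassocInv_mul_includeRight :
    onTail H (appendOne k H H H) QB.reassoc * onHead (H ⊗[k] H) QB.comul QB.reassocInv *
        onTail H (onTail H QB.comul) QB.reassocInv * includeRight QB.reassoc =
      onTail H (onHead H QB.comul) QB.reassocInv := by
  rw [pentagon_reassocInv, mul_assoc, map_reassocInv_mul_map_reassoc, mul_one]

theorem pentagon_appendOne_reassocInv :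
    onTail H (appendOne k H H H) QB.reassocInv * onTail H (onHead H QB.comul) QB.reassocInv =
      onHead (H ⊗[k] H) QB.comul QB.reassocInv * onTail H (onTail H QB.comul) QB.reassocInv *
        includeRight QB.reassoc := by
  rw [← pentagon_reassocInv_mul_includeRight, mul_assoc, mul_assoc, ← mul_assoc,
    map_reassocInv_mul_map_reassoc, one_mul, mul_assoc]

end PentagonVariants

end QuasiBialgebra

namespace QuasiHopfAlgebra

variable {k : Type*} [Field k] {H : Type*} [Ring H] [Algebra k H] (QH : QuasiHopfAlgebra k H)

theorem Sinv_mul (g h : H) : QH.Sinv (g * h) = QH.Sinv h * QH.Sinv g := by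
  rw [← QH.Sinv_S (QH.Sinv h * QH.Sinv g), QH.S_mul, QH.S_Sinv, QH.S_Sinv]

theorem Sinv_one : QH.Sinv 1 = 1 := by
  rw [← QH.S_one, QH.Sinv_S, QH.S_one]

/-- The antimultiplicative map `a ⊗ b ↦ S(b) ⊗ S(a)`. -/
def antipodeSwap : H ⊗[k] H →ₗ[k] H ⊗[k] H := swapMap QH.S

/-- The antimultiplicative map `a ⊗ b ↦ S⁻¹(b) ⊗ S⁻¹(a)`, inverse to `antipodeSwap`. -/
def antipodeInvSwap : H ⊗[k] H →ₗ[k] H ⊗[k] H := swapMap QH.Sinv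

@[simp] theorem antipodeSwap_tmul (a b : H) : QH.antipodeSwap (a ⊗ₜ b) = QH.S b ⊗ₜ QH.S a := rfl

@[simp] theorem antipodeInvSwap_tmul (a b : H) :
    QH.antipodeInvSwap (a ⊗ₜ b) = QH.Sinv b ⊗ₜ QH.Sinv a := rfl

theorem antipodeSwap_mul (u v : H ⊗[k] H) :
    QH.antipodeSwap (u * v) = QH.antipodeSwap v * QH.antipodeSwap u :=
  swapMap_mul QH.S_mul u v

theorem antipodeInvSwap_mul (u v : H ⊗[k] H) :
    QH.antipodeInvSwap (u * v) = QH.antipodeInvSwap v * QH.antipodeInvSwap u :=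
  swapMap_mul QH.Sinv_mul u v

@[simp] theorem antipodeInvSwap_antipodeSwap (u : H ⊗[k] H) :
    QH.antipodeInvSwap (QH.antipodeSwap u) = u :=
  swapMap_swapMap QH.Sinv_S u

section EvaluationForms

/-- The evaluation form `a ⊗ b ↦ S(a) α b`. -/
def evalForm : H ⊗[k] H →ₗ[k] H := sandwich QH.S QH.aE LinearMap.id

/-- The coevaluation form `a ⊗ b ↦ a β S(b)`. -/
def coevalForm : H ⊗[k] H →ₗ[k] H := sandwich LinearMap.id QH.bE QH.S

@[simp] theorem evalForm_tmul (a b : H) : QH.evalForm (a ⊗ₜ b) = QH.S a * QH.aE * b := rfl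

@[simp] theorem coevalForm_tmul (a b : H) : QH.coevalForm (a ⊗ₜ b) = a * QH.bE * QH.S b := rfl

@[simp] theorem evalForm_comul (h : H) : QH.evalForm (QH.comul h) = QH.counit h • QH.aE := by
  simpa [QH.hcomul] using QH.antip_l h

@[simp] theorem coevalForm_comul (h : H) :
    QH.coevalForm (QH.comul h) = QH.counit h • QH.bE := by
  simpa [QH.hcomul] using QH.antip_r h

theorem evalForm_comul_mul (h : H) (u : H ⊗[k] H) :
    QH.evalForm (QH.comul h * u) = QH.counit h • QH.evalForm u := by
  rw [evalForm, sandwich_mul QH.S_mul (fun _ _ => rfl), ← evalForm, evalForm_comul,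
    sandwich_smul_middle, evalForm]

theorem coevalForm_mul_comul (u : H ⊗[k] H) (h : H) :
    QH.coevalForm (u * QH.comul h) = QH.counit h • QH.coevalForm u := by
  rw [coevalForm, sandwich_mul_left (fun _ _ => rfl) QH.S_mul, ← coevalForm, coevalForm_comul,
    sandwich_smul_middle, coevalForm]

/-- The form `a ⊗ b ⊗ c ⊗ d ↦ S(b) α c ⊗ S(a) α d`. -/
def evalForm₂ : H ⊗[k] (H ⊗[k] (H ⊗[k] H)) →ₗ[k] H ⊗[k] H :=
  sandwich QH.antipodeSwap (QH.aE ⊗ₜ QH.aE) LinearMap.id ∘ₗ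
    (Algebra.TensorProduct.assoc k k k H H (H ⊗[k] H)).symm.toLinearMap

@[simp] theorem evalForm₂_tmul (a b c d : H) :
    QH.evalForm₂ (a ⊗ₜ (b ⊗ₜ (c ⊗ₜ d))) = QH.evalForm (b ⊗ₜ c) ⊗ₜ QH.evalForm (a ⊗ₜ d) := by
  simp [evalForm₂]

theorem evalForm₂_mul (w z : H ⊗[k] (H ⊗[k] (H ⊗[k] H))) :
    QH.evalForm₂ (w * z) = sandwich QH.antipodeSwap (QH.evalForm₂ w) LinearMap.id
      ((Algebra.TensorProduct.assoc k k k H H (H ⊗[k] H)).symm z) := by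
  simp only [evalForm₂, LinearMap.comp_apply, AlgEquiv.toLinearMap_apply, map_mul]
  exact sandwich_mul QH.antipodeSwap_mul (fun _ _ => rfl) _ _ _

theorem evalForm₂_tmul_assoc (a : H) (v : H ⊗[k] H) (c : H) :
    QH.evalForm₂ (a ⊗ₜ TensorProduct.assoc k H H H (v ⊗ₜ c)) =
      QH.evalForm v ⊗ₜ QH.evalForm (a ⊗ₜ c) := by
  induction v using TensorProduct.induction_on with
  | zero => simp
  | add x y hx hy => simp only [map_add, add_tmul, tmul_add, hx, hy]
  | tmul x y => simp

theorem evalForm₂_onTail_onHead_comul (w : H ⊗[k] (H ⊗[k] H)) :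
    QH.evalForm₂ (onTail H (onHead H QH.comul) w) =
      QH.aE ⊗ₜ QH.evalForm (onTail H (QH.counitHead H) w) := by
  induction w using induction_on_three with
  | zero => simp
  | add x y hx hy => simp only [map_add, tmul_add, hx, hy]
  | tmul a b c => simp [onHead_tmul, evalForm₂_tmul_assoc, smul_tmul, -evalForm_tmul]

end EvaluationForms

section Gamma

/-- The tensor `∑ A¹ ⊗ A² ⊗ A³ ⊗ A⁴ = (Φ ⊗ 1)(Δ ⊗ id ⊗ id)(Φ⁻¹)`. -/
def gammaTensor : H ⊗[k] (H ⊗[k] (H ⊗[k] H)) :=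
  onTail H (appendOne k H H H) QH.reassoc * onHead (H ⊗[k] H) QH.comul QH.reassocInv

/-- The element `γ` entering the Drinfeld twist. -/
def gammaElt : H ⊗[k] H := QH.evalForm₂ QH.gammaTensor

theorem appendOne_reassoc_mul_onHead_onHead (v : H ⊗[k] H) :
    onTail H (appendOne k H H H) QH.reassoc * onHead (H ⊗[k] H) QH.comul (onHead H QH.comul v) =
      onTail H (onHead H QH.comul) (onHead H QH.comul v) *
        onTail H (appendOne k H H H) QH.reassoc := by
  induction v using TensorProduct.induction_on with
  | zero => simp
  | add x y hx hy => simp only [map_add, mul_add, add_mul, hx, hy]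
  | tmul a b =>
    have coassoc_tmul := congrArg (fun u => assocFour k H H H H (u ⊗ₜ[k] b))
      (QH.onTail_comul_mul_reassoc a)
    have split_left (u u' : H ⊗[k] (H ⊗[k] H)) :
        (u * u') ⊗ₜ[k] b = u ⊗ₜ b * u' ⊗ₜ 1 := by simp
    have split_right (u u' : H ⊗[k] (H ⊗[k] H)) :
        (u * u') ⊗ₜ[k] b = u ⊗ₜ 1 * u' ⊗ₜ b := by simp
    rw [split_left, split_right, map_mul, map_mul, assocFour_onTail_tmul, assocFour_onHead_tmul,
      assocFour_tmul_one] at coassoc_tmul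
    rw [onHead_tmul, coassoc_tmul]

theorem gammaTensor_mul_onHead_onTail_comul (h : H) :
    QH.gammaTensor * onHead (H ⊗[k] H) QH.comul (onTail H QH.comul (QH.comul h)) =
      onTail H (onHead H QH.comul) (onHead H QH.comul (QH.comul h)) * QH.gammaTensor := by
  rw [gammaTensor, mul_assoc, ← map_mul, QH.reassocInv_mul_onTail_comul, map_mul, ← mul_assoc,
    appendOne_reassoc_mul_onHead_onHead, mul_assoc]

/-- The form `a ⊗ b ↦ (S ⊗ S)(Δᵒᵖ(a)) γ Δ(b)`. -/
def gammaForm : H ⊗[k] H →ₗ[k] H ⊗[k] H :=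
  sandwich (QH.antipodeSwap ∘ₗ QH.comul.toLinearMap) QH.gammaElt QH.comul.toLinearMap

@[simp] theorem gammaForm_tmul (a b : H) : QH.gammaForm (a ⊗ₜ b) =
    QH.antipodeSwap (QH.comul a) * QH.gammaElt * QH.comul b := rfl

theorem gammaForm_eq_evalForm₂ (v : H ⊗[k] H) : QH.gammaForm v =
    QH.evalForm₂ (QH.gammaTensor * onHead (H ⊗[k] H) QH.comul (onTail H QH.comul v)) := by
  rw [evalForm₂_mul, onHead_onTail_eq_assoc_map, AlgEquiv.symm_apply_apply, sandwich_map]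
  rfl

@[simp] theorem gammaForm_comul (h : H) :
    QH.gammaForm (QH.comul h) = QH.counit h • QH.gammaElt := by
  rw [gammaForm_eq_evalForm₂, gammaTensor_mul_onHead_onTail_comul, evalForm₂_mul,
    evalForm₂_onTail_onHead_comul, QH.onTail_counitHead_onHead_comul, evalForm_comul, tmul_smul,
    sandwich_smul_middle, gammaElt]
  rfl

theorem gammaForm_mul (v w : H ⊗[k] H) : QH.gammaForm (v * w) =
    sandwich (QH.antipodeSwap ∘ₗ QH.comul.toLinearMap) (QH.gammaForm v) QH.comul.toLinearMap w :=
  sandwich_mul (fun _ _ => by simp [antipodeSwap_mul]) (map_mul QH.comul) _ _ _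

theorem gammaForm_comul_mul (h : H) (w : H ⊗[k] H) :
    QH.gammaForm (QH.comul h * w) = QH.counit h • QH.gammaForm w := by
  rw [gammaForm_mul, gammaForm_comul, sandwich_smul_middle, gammaForm]

theorem gammaForm_mul_tmul_one (v : H ⊗[k] H) (h : H) :
    QH.gammaForm (v * h ⊗ₜ 1) = QH.antipodeSwap (QH.comul h) * QH.gammaForm v := by
  rw [gammaForm_mul]
  simp

end Gamma

end QuasiHopfAlgebra

namespace QuasiHopfAlgebra

variable {k : Type*} [Field k] {H : Type*} [Ring H] [Algebra k H] (QH : QuasiHopfAlgebra k H)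

section TwistForms

theorem coevalForm_tmul_one_mul (b : H) (v : H ⊗[k] H) :
    QH.coevalForm (b ⊗ₜ 1 * v) = b * QH.coevalForm v :=
  sandwich_tmul_one_mul (fun _ _ => rfl) _ _ b v

theorem coevalForm_one_tmul_mul (b : H) (v : H ⊗[k] H) :
    QH.coevalForm (1 ⊗ₜ b * v) = QH.coevalForm v * QH.S b := by
  rw [coevalForm, sandwich_mul_left (fun _ _ => rfl) QH.S_mul]
  simp

/-- The form `a ⊗ b ⊗ c ↦ a β S(b) α c`. -/
def zigzagForm : H ⊗[k] (H ⊗[k] H) →ₗ[k] H :=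
  sandwich LinearMap.id QH.bE QH.evalForm

@[simp] theorem zigzagForm_tmul (a : H) (v : H ⊗[k] H) :
    QH.zigzagForm (a ⊗ₜ v) = a * QH.bE * QH.evalForm v := rfl

theorem zigzagForm_reassoc : QH.zigzagForm QH.reassoc = 1 := by
  simpa [QuasiBialgebra.reassoc, mul_assoc] using QH.antip_X

theorem zigzagForm_tmul_one_mul (b : H) (v : H ⊗[k] (H ⊗[k] H)) :
    QH.zigzagForm (b ⊗ₜ 1 * v) = b * QH.zigzagForm v :=
  sandwich_tmul_one_mul (fun _ _ => rfl) _ _ b v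

theorem zigzagForm_assoc_tmul (u : H ⊗[k] H) (c : H) :
    QH.zigzagForm (Algebra.TensorProduct.assoc k k k H H H (u ⊗ₜ c)) =
      QH.coevalForm u * QH.aE * c := by
  induction u using TensorProduct.induction_on with
  | zero => simp
  | add x y hx hy => simp only [map_add, add_tmul, add_mul, hx, hy]
  | tmul a b => simp [mul_assoc]

theorem zigzagForm_mul_onHead_comul (w : H ⊗[k] (H ⊗[k] H)) (v : H ⊗[k] H) :
    QH.zigzagForm (w * onHead H QH.comul v) = QH.zigzagForm w * QH.counitHead H v := by
  obtain ⟨w, rfl⟩ := (Algebra.TensorProduct.assoc k k k H H H).surjective w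
  induction w using TensorProduct.induction_on with
  | zero => simp
  | add x y hx hy => simp only [map_add, add_mul, hx, hy]
  | tmul u d =>
    induction v using TensorProduct.induction_on with
    | zero => simp
    | add x y hx hy => simp only [map_add, mul_add, hx, hy]
    | tmul q r =>
      have assoc_mul : Algebra.TensorProduct.assoc k k k H H H (u ⊗ₜ d) *
          onHead H QH.comul (q ⊗ₜ r) =
            Algebra.TensorProduct.assoc k k k H H H ((u * QH.comul q) ⊗ₜ (d * r)) := by
        rw [← Algebra.TensorProduct.tmul_mul_tmul, map_mul]
        rfl
      rw [assoc_mul, zigzagForm_assoc_tmul, zigzagForm_assoc_tmul, coevalForm_mul_comul]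
      simp [mul_assoc]

theorem zigzagForm_onTail_comul_mul (v : H ⊗[k] H) (z : H ⊗[k] (H ⊗[k] H)) :
    QH.zigzagForm (onTail H QH.comul v * z) = QH.counitLast H v * QH.zigzagForm z := by
  induction v using TensorProduct.induction_on with
  | zero => simp
  | add x y hx hy => simp only [map_add, add_mul, hx, hy]
  | tmul a h =>
    induction z using TensorProduct.induction_on with
    | zero => simp
    | add x y hx hy => simp only [map_add, mul_add, hx, hy]
    | tmul p u => simp [evalForm_comul_mul, mul_assoc]

theorem lTensor_onHead_comul_mul {B : Type*} [Ring B] [Algebra k B] {F : H ⊗[k] B →ₗ[k] H}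
    (hF : ∀ h u, F (h ⊗ₜ 1 * u) = h * F u) (h : H) (b : B) (z : H ⊗[k] (H ⊗[k] B)) :
    F.lTensor H (onHead B QH.comul (h ⊗ₜ b) * z) =
      QH.comul h * F.lTensor H (1 ⊗ₜ (1 ⊗ₜ b) * z) := by
  rw [onHead_tmul]
  induction QH.comul h using TensorProduct.induction_on with
  | zero => simp
  | add x y hx hy => simp only [map_add, add_tmul, add_mul, hx, hy]
  | tmul x y =>
    induction z using TensorProduct.induction_on with
    | zero => simp
    | add u v hu hv => simp only [map_add, mul_add, hu, hv]
    | tmul a u =>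
      have split : F (y ⊗ₜ b * u) = y * F (1 ⊗ₜ b * u) := by
        rw [← hF, ← mul_assoc, Algebra.TensorProduct.tmul_mul_tmul, mul_one, one_mul]
      simp [split]

theorem gammaForm_lTensor_onHead_comul_mul {B : Type*} [Ring B] [Algebra k B]
    {F : H ⊗[k] B →ₗ[k] H} (hF : ∀ h u, F (h ⊗ₜ 1 * u) = h * F u) (w : H ⊗[k] B)
    (z : H ⊗[k] (H ⊗[k] B)) :
    QH.gammaForm (F.lTensor H (onHead B QH.comul w * z)) =
      QH.gammaForm (F.lTensor H (1 ⊗ₜ (1 ⊗ₜ QH.counitHead B w) * z)) := by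
  induction w using TensorProduct.induction_on with
  | zero => simp
  | add x y hx hy => simp only [map_add, tmul_add, add_mul, hx, hy]
  | tmul h b => simp [QH.lTensor_onHead_comul_mul hF, gammaForm_comul_mul]

/-- The form `a ⊗ b ⊗ c ↦ (S ⊗ S)(Δᵒᵖ(a)) γ Δ(b β S(c))`, whose value at `Φ⁻¹` is the Drinfeld
twist. -/
def twistForm : H ⊗[k] (H ⊗[k] H) →ₗ[k] H ⊗[k] H :=
  QH.gammaForm ∘ₗ QH.coevalForm.lTensor H

@[simp] theorem twistForm_tmul (a : H) (v : H ⊗[k] H) :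
    QH.twistForm (a ⊗ₜ v) = QH.gammaForm (a ⊗ₜ QH.coevalForm v) := rfl

theorem twistForm_last_mul (h : H) (u : H ⊗[k] (H ⊗[k] H)) :
    QH.twistForm (1 ⊗ₜ (1 ⊗ₜ h) * u) = QH.twistForm u * QH.comul (QH.S h) := by
  induction u using TensorProduct.induction_on with
  | zero => simp
  | add x y hx hy => simp only [map_add, mul_add, add_mul, hx, hy]
  | tmul a v => simp [coevalForm_one_tmul_mul, mul_assoc]

theorem twistForm_mul_onTail_comul (u : H ⊗[k] (H ⊗[k] H)) (v : H ⊗[k] H) :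
    QH.twistForm (u * onTail H QH.comul v) =
      QH.antipodeSwap (QH.comul (QH.counitLast H v)) * QH.twistForm u := by
  have coeval_counit : QH.coevalForm.lTensor H (u * onTail H QH.comul v) =
      QH.coevalForm.lTensor H u * QH.counitLast H v ⊗ₜ 1 := by
    rw [lTensor_mul_onTail (η := (Algebra.ofId k H).comp QH.counit)
      (fun w h => by simp [coevalForm_mul_comul, Algebra.ofId_apply, ← Algebra.commutes,
        Algebra.smul_def])]
    congr 1
    induction v using TensorProduct.induction_on with
    | zero => simp
    | add x y hx hy => simp only [map_add, add_tmul, hx, hy]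
    | tmul a h => simp [Algebra.ofId_apply, Algebra.algebraMap_eq_smul_one, smul_tmul]
  rw [twistForm, LinearMap.comp_apply, coeval_counit, gammaForm_mul_tmul_one]
  rfl

theorem twistForm_reassocInv_mul_comul_S (h : H) :
    QH.twistForm QH.reassocInv * QH.comul (QH.S h) =
      QH.antipodeSwap (QH.comul h) * QH.twistForm QH.reassocInv :=
  calc QH.twistForm QH.reassocInv * QH.comul (QH.S h)
    _ = QH.twistForm (onHead H QH.comul (QH.comul h) * QH.reassocInv) := by
      rw [← twistForm_last_mul, twistForm, LinearMap.comp_apply, LinearMap.comp_apply,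
        QH.gammaForm_lTensor_onHead_comul_mul QH.coevalForm_tmul_one_mul, QH.counitHead_comul]
    _ = QH.antipodeSwap (QH.comul h) * QH.twistForm QH.reassocInv := by
      rw [← QH.reassocInv_mul_onTail_comul, twistForm_mul_onTail_comul, QH.counitLast_comul]

/-- The form `a ⊗ b ⊗ c ⊗ d ↦ (S ⊗ S)(Δᵒᵖ(a)) γ Δ(b β S(c) α d)`. -/
def twistEvalForm : H ⊗[k] (H ⊗[k] (H ⊗[k] H)) →ₗ[k] H ⊗[k] H :=
  QH.gammaForm ∘ₗ QH.zigzagForm.lTensor H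

theorem twistEvalForm_appendOne (u : H ⊗[k] (H ⊗[k] H)) :
    QH.twistEvalForm (onTail H (appendOne k H H H) u) = QH.twistForm u * QH.comul QH.aE := by
  induction u using induction_on_three with
  | zero => simp
  | add x y hx hy => simp only [map_add, add_mul, hx, hy]
  | tmul a b c => simp [twistEvalForm, mul_assoc]

theorem twistEvalForm_includeRight_reassoc :
    QH.twistEvalForm (includeRight QH.reassoc) = QH.gammaElt := by
  rw [twistEvalForm, LinearMap.comp_apply, Algebra.TensorProduct.includeRight_apply,
    LinearMap.lTensor_tmul, zigzagForm_reassoc, gammaForm_tmul, map_one QH.comul, mul_one,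
    Algebra.TensorProduct.one_def, antipodeSwap_tmul, QH.S_one, ← Algebra.TensorProduct.one_def,
    one_mul]

theorem twistEvalForm_mul_onTail_onHead_reassocInv (z : H ⊗[k] (H ⊗[k] (H ⊗[k] H))) :
    QH.twistEvalForm (z * onTail H (onHead H QH.comul) QH.reassocInv) = QH.twistEvalForm z := by
  rw [twistEvalForm, LinearMap.comp_apply, lTensor_mul_onTail QH.zigzagForm_mul_onHead_comul,
    QH.onTail_counitHead_reassocInv, mul_one, LinearMap.comp_apply]

theorem twistEvalForm_onTail_onTail_reassocInv_mul (z : H ⊗[k] (H ⊗[k] (H ⊗[k] H))) :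
    QH.twistEvalForm (onTail H (onTail H QH.comul) QH.reassocInv * z) = QH.twistEvalForm z := by
  rw [twistEvalForm, LinearMap.comp_apply, lTensor_onTail_mul QH.zigzagForm_onTail_comul_mul,
    QH.onTail_counitLast_reassocInv, one_mul, LinearMap.comp_apply]

theorem twistEvalForm_onHead_reassocInv_mul (z : H ⊗[k] (H ⊗[k] (H ⊗[k] H))) :
    QH.twistEvalForm (onHead (H ⊗[k] H) QH.comul QH.reassocInv * z) = QH.twistEvalForm z := by
  rw [twistEvalForm, LinearMap.comp_apply,
    QH.gammaForm_lTensor_onHead_comul_mul QH.zigzagForm_tmul_one_mul, QH.counitHead_reassocInv,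
    ← Algebra.TensorProduct.one_def, ← Algebra.TensorProduct.one_def, one_mul,
    LinearMap.comp_apply]

theorem twistForm_reassocInv_mul_comul_aE :
    QH.twistForm QH.reassocInv * QH.comul QH.aE = QH.gammaElt := by
  rw [← twistEvalForm_appendOne, ← twistEvalForm_mul_onTail_onHead_reassocInv,
    QH.pentagon_appendOne_reassocInv, mul_assoc, twistEvalForm_onHead_reassocInv_mul,
    twistEvalForm_onTail_onTail_reassocInv_mul, twistEvalForm_includeRight_reassoc]

end TwistForms

theorem gammaElt_eq_sum : QH.gammaElt =
    ∑ p ∈ range QH.nP, ∑ j ∈ range QH.nQ, ∑ l ∈ range QH.nD,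
      (QH.S (QH.X2 p * QH.D2 (QH.x1 j) l) * QH.aE * (QH.X3 p * QH.x2 j)) ⊗ₜ[k]
        (QH.S (QH.X1 p * QH.D1 (QH.x1 j) l) * QH.aE * QH.x3 j) := by
  simp only [gammaElt, gammaTensor, QuasiBialgebra.reassoc, QuasiBialgebra.reassocInv, map_sum,
    onTail_tmul, appendOne_tmul, onHead_tmul, QH.hcomul, sum_tmul, assoc_tmul]
  simp only [Finset.sum_mul]
  simp only [Finset.mul_sum, map_sum, Algebra.TensorProduct.tmul_mul_tmul, evalForm₂_tmul,
    evalForm_tmul, one_mul]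

end QuasiHopfAlgebra

namespace DrinfeldTwist

variable {k : Type*} [Field k] {H : Type*} [Ring H] [Algebra k H] {QH : QuasiHopfAlgebra k H}
  (DT : DrinfeldTwist QH)

/-- The Drinfeld twist `f` as a tensor. -/
def twist : H ⊗[k] H := ∑ t ∈ range DT.nf, DT.f1 t ⊗ₜ DT.f2 t

/-- The inverse Drinfeld twist `f⁻¹` as a tensor. -/
def twistInv : H ⊗[k] H := ∑ t ∈ range DT.nf, DT.g1 t ⊗ₜ DT.g2 t

theorem twist_mul_twistInv : DT.twist * DT.twistInv = 1 := by
  rw [twist, twistInv, Finset.sum_mul_sum]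
  simpa [Algebra.TensorProduct.one_def] using DT.f_inv

theorem twistInv_mul_twist : DT.twistInv * DT.twist = 1 := by
  rw [twist, twistInv, Finset.sum_mul_sum]
  simpa [Algebra.TensorProduct.one_def] using DT.inv_f

theorem twist_eq_twistForm : DT.twist = QH.twistForm QH.reassocInv := by
  rw [twist, DT.h_f, QuasiBialgebra.reassocInv, map_sum]
  refine Finset.sum_congr rfl fun j _ => ?_
  rw [QuasiHopfAlgebra.twistForm_tmul, QuasiHopfAlgebra.gammaForm_tmul,
    QuasiHopfAlgebra.coevalForm_tmul, QH.hcomul (QH.x1 j), map_sum, Finset.sum_mul,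
    Finset.sum_mul]
  refine Finset.sum_congr rfl fun l _ => ?_
  rw [QuasiHopfAlgebra.gammaElt_eq_sum]
  simp only [Finset.mul_sum]
  simp only [Finset.sum_mul]
  simp only [QH.hcomul (_ * _), Finset.mul_sum, QuasiHopfAlgebra.antipodeSwap_tmul,
    Algebra.TensorProduct.tmul_mul_tmul]

theorem twist_mul_comul_S (h : H) :
    DT.twist * QH.comul (QH.S h) = QH.antipodeSwap (QH.comul h) * DT.twist := by
  rw [twist_eq_twistForm, QuasiHopfAlgebra.twistForm_reassocInv_mul_comul_S]

theorem twist_mul_comul_aE : DT.twist * QH.comul QH.aE = QH.gammaElt := by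
  rw [twist_eq_twistForm, QuasiHopfAlgebra.twistForm_reassocInv_mul_comul_aE]

end DrinfeldTwist

namespace QuasiHopfAlgebra

variable {k : Type*} [Field k] {H : Type*} [Ring H] [Algebra k H] (QH : QuasiHopfAlgebra k H)

section EvalHead

/-- The form `a ⊗ b ⊗ c ↦ S(a) α b ⊗ c`. -/
def evalHead : H ⊗[k] (H ⊗[k] H) →ₗ[k] H ⊗[k] H :=
  sandwich ((includeLeft : H →ₐ[k] H ⊗[k] H).toLinearMap ∘ₗ QH.S) (QH.aE ⊗ₜ 1) LinearMap.id

@[simp] theorem evalHead_tmul (a b c : H) :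
    QH.evalHead (a ⊗ₜ (b ⊗ₜ c)) = (QH.S a * QH.aE * b) ⊗ₜ c := by
  simp [evalHead]

theorem evalHead_mul (u w : H ⊗[k] (H ⊗[k] H)) : QH.evalHead (u * w) =
    sandwich ((includeLeft : H →ₐ[k] H ⊗[k] H).toLinearMap ∘ₗ QH.S) (QH.evalHead u)
      LinearMap.id w :=
  sandwich_mul (fun _ _ => by simp [QH.S_mul]) (fun _ _ => rfl) _ _ _

theorem evalHead_assoc_tmul (v : H ⊗[k] H) (c : H) :
    QH.evalHead (TensorProduct.assoc k H H H (v ⊗ₜ c)) = QH.evalForm v ⊗ₜ c := by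
  induction v using TensorProduct.induction_on with
  | zero => simp
  | add x y hx hy => simp only [map_add, add_tmul, hx, hy]
  | tmul a b => simp

theorem evalHead_onHead_comul (v : H ⊗[k] H) :
    QH.evalHead (onHead H QH.comul v) = 1 ⊗ₜ QH.counitHead H v * QH.aE ⊗ₜ 1 := by
  induction v using TensorProduct.induction_on with
  | zero => simp
  | add x y hx hy => simp only [map_add, tmul_add, add_mul, hx, hy]
  | tmul a b => simp [onHead_tmul, evalHead_assoc_tmul, smul_tmul]

theorem evalHead_onHead_comul_mul (v : H ⊗[k] H) (w : H ⊗[k] (H ⊗[k] H)) :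
    QH.evalHead (onHead H QH.comul v * w) = 1 ⊗ₜ QH.counitHead H v * QH.evalHead w := by
  rw [evalHead_mul, evalHead_onHead_comul]
  induction w using induction_on_three with
  | zero => simp
  | add x y hx hy => simp only [map_add, mul_add, hx, hy]
  | tmul a b c => simp [mul_assoc]

/-- The element `q_L = ∑ S(x¹) α x² ⊗ x³`. -/
def qElt : H ⊗[k] H := QH.evalHead QH.reassocInv

theorem one_tmul_mul_qElt (h : H) :
    1 ⊗ₜ h * QH.qElt = QH.evalHead (QH.reassocInv * onTail H QH.comul (QH.comul h)) := by
  rw [QH.reassocInv_mul_onTail_comul, evalHead_onHead_comul_mul, QH.counitHead_comul, qElt]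

theorem one_tmul_aE_mul_qElt : 1 ⊗ₜ QH.aE * QH.qElt =
    QH.evalForm₂ (QH.gammaTensor * onTail H (onTail H QH.comul) QH.reassocInv) := by
  have alpha_evalHead (u : H ⊗[k] (H ⊗[k] H)) : 1 ⊗ₜ QH.aE * QH.evalHead u =
      sandwich QH.antipodeSwap (QH.aE ⊗ₜ QH.aE) LinearMap.id
        ((Algebra.TensorProduct.assoc k k k H H (H ⊗[k] H)).symm (includeRight u)) := by
    induction u using induction_on_three with
    | zero => simp
    | add x y hx hy => simp only [map_add, mul_add, hx, hy]
    | tmul a b c => simp [QH.S_one]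
  have evalForm_one : QH.evalForm 1 = QH.aE := by
    simp [Algebra.TensorProduct.one_def, QH.S_one]
  rw [gammaTensor, QH.pentagon_reassocInv, evalForm₂_mul, evalForm₂_onTail_onHead_comul,
    QH.onTail_counitHead_reassocInv, evalForm_one, qElt, alpha_evalHead]

end EvalHead

section RightAct

variable {B C P Q : Type*} [Ring B] [Algebra k B] [Ring C] [Algebra k C] [Ring P] [Algebra k P]
  [Ring Q] [Algebra k Q]

/-- The right action `x · (p ⊗ h) = D(S⁻¹(h)) x E(p)` of `P ⊗ H` on an algebra `B`, for algebra
maps `D : H → B` and `E : P → B`, as a linear map in the acting element. -/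
def rightAct (D : H →ₐ[k] B) (E : P →ₐ[k] B) (x : B) : P ⊗[k] H →ₗ[k] B :=
  sandwich (D.toLinearMap ∘ₗ QH.Sinv) x E.toLinearMap ∘ₗ (TensorProduct.comm k P H).toLinearMap

@[simp] theorem rightAct_tmul (D : H →ₐ[k] B) (E : P →ₐ[k] B) (x : B) (p : P) (h : H) :
    QH.rightAct D E x (p ⊗ₜ h) = D (QH.Sinv h) * x * E p := rfl

theorem rightAct_mul (D : H →ₐ[k] B) (E : P →ₐ[k] B) (x : B) (v w : P ⊗[k] H) :
    QH.rightAct D E x (v * w) = QH.rightAct D E (QH.rightAct D E x v) w := by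
  have comm_mul : TensorProduct.comm k P H (v * w) =
      TensorProduct.comm k P H v * TensorProduct.comm k P H w :=
    map_mul (Algebra.TensorProduct.comm k P H) v w
  simp only [rightAct, LinearMap.comp_apply, LinearEquiv.coe_coe, comm_mul]
  exact sandwich_mul (fun _ _ => by simp [QH.Sinv_mul]) (map_mul E) _ _ _

theorem map_rightAct (φ : B →ₐ[k] C) (D : H →ₐ[k] B) (E : P →ₐ[k] B) (x : B) (v : P ⊗[k] H) :
    φ (QH.rightAct D E x v) = QH.rightAct (φ.comp D) (φ.comp E) (φ x) v := by
  induction v using TensorProduct.induction_on with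
  | zero => simp
  | add u v hu hv => simp only [map_add, hu, hv]
  | tmul p h => simp

theorem rightAct_mul_of_commute (D : H →ₐ[k] B) {E : P →ₐ[k] B} {y : B}
    (hy : ∀ p, Commute y (E p)) (x : B) (v : P ⊗[k] H) :
    QH.rightAct D E x v * y = QH.rightAct D E (x * y) v := by
  induction v using TensorProduct.induction_on with
  | zero => simp
  | add u v hu hv => simp only [map_add, add_mul, hu, hv]
  | tmul p h => simp only [rightAct_tmul, mul_assoc, (hy p).eq]

theorem rightAct_mul_left {D D' : H →ₐ[k] B} {y : B} (hy : ∀ h, y * D h = D' h * y)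
    (E : P →ₐ[k] B) (x : B) (v : P ⊗[k] H) :
    y * QH.rightAct D E x v = QH.rightAct D' E (y * x) v := by
  induction v using TensorProduct.induction_on with
  | zero => simp
  | add u v hu hv => simp only [map_add, mul_add, hu, hv]
  | tmul p h => simp only [rightAct_tmul, ← mul_assoc, hy]

theorem rightAct_assoc_symm_includeRight (D : H →ₐ[k] B) (E : Q ⊗[k] P →ₐ[k] B) (x : B)
    (v : P ⊗[k] H) :
    QH.rightAct D E x ((Algebra.TensorProduct.assoc k k k Q P H).symm (includeRight v)) =
      QH.rightAct D (E.comp includeRight) x v := by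
  induction v using TensorProduct.induction_on with
  | zero => simp
  | add u v hu hv => simp only [map_add, hu, hv]
  | tmul p h => simp

theorem eq_sum_mul_Sinv_aE_mul (e : H →ₐ[k] B) (x : B) : x = ∑ j ∈ range QH.nQ,
    x * e (QH.Sinv (QH.x2 j * QH.bE * QH.S (QH.x3 j))) * e (QH.Sinv QH.aE) * e (QH.x1 j) := by
  have one_eq : (1 : H) = ∑ j ∈ range QH.nQ,
      QH.Sinv (QH.x2 j * QH.bE * QH.S (QH.x3 j)) * QH.Sinv QH.aE * QH.x1 j := by
    rw [← QH.Sinv_one, ← QH.antip_x, map_sum]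
    simp [Sinv_mul, QH.Sinv_S, mul_assoc]
  simpa only [map_one, mul_one, map_sum, map_mul, Finset.mul_sum, mul_assoc] using
    congrArg (fun h => x * e h) one_eq

theorem eq_of_mul_Sinv_aE_eq (D : H →ₐ[k] B) {e E : H →ₐ[k] B}
    (commute_e_E : ∀ a b, Commute (e a) (E b)) {x y : B}
    (hx : ∀ h, x * e (QH.Sinv h) = QH.rightAct D E x (QH.comul h))
    (hy : ∀ h, y * e (QH.Sinv h) = QH.rightAct D E y (QH.comul h))
    (h_aE : x * e (QH.Sinv QH.aE) = y * e (QH.Sinv QH.aE)) : x = y := by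
  have eq_after_Sinv (h : H) : x * e (QH.Sinv h) * e (QH.Sinv QH.aE) =
      y * e (QH.Sinv h) * e (QH.Sinv QH.aE) := by
    rw [hx, hy, rightAct_mul_of_commute _ _ (commute_e_E _), h_aE,
      rightAct_mul_of_commute _ _ (commute_e_E _)]
  rw [QH.eq_sum_mul_Sinv_aE_mul e x, QH.eq_sum_mul_Sinv_aE_mul e y]
  simp only [eq_after_Sinv]

end RightAct

section EvalLast

/-- The form `a ⊗ b ⊗ c ↦ Δ(S⁻¹(α c)) (a ⊗ b)`. -/
def evalLast : H ⊗[k] (H ⊗[k] H) →ₗ[k] H ⊗[k] H :=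
  QH.rightAct QH.comul (AlgHom.id k (H ⊗[k] H)) (QH.comul (QH.Sinv QH.aE)) ∘ₗ
    (Algebra.TensorProduct.assoc k k k H H H).symm.toLinearMap

@[simp] theorem evalLast_tmul (a b c : H) :
    QH.evalLast (a ⊗ₜ (b ⊗ₜ c)) = QH.comul (QH.Sinv (QH.aE * c)) * a ⊗ₜ b := by
  simp [evalLast, Sinv_mul]

theorem evalLast_assoc_tmul (v : H ⊗[k] H) (c : H) :
    QH.evalLast (TensorProduct.assoc k H H H (v ⊗ₜ c)) = QH.comul (QH.Sinv (QH.aE * c)) * v := by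
  induction v using TensorProduct.induction_on with
  | zero => simp
  | add x y hx hy => simp only [map_add, add_tmul, mul_add, hx, hy]
  | tmul a b => simp

theorem evalLast_mul_includeRight (u : H ⊗[k] (H ⊗[k] H)) (v : H ⊗[k] H) :
    QH.evalLast (u * includeRight v) = QH.rightAct QH.comul includeRight (QH.evalLast u) v := by
  simp only [evalLast, LinearMap.comp_apply, AlgEquiv.toLinearMap_apply, map_mul, rightAct_mul]
  exact QH.rightAct_assoc_symm_includeRight _ _ _ v

end EvalLast

end QuasiHopfAlgebra

namespace DrinfeldTwist

variable {k : Type*} [Field k] {H : Type*} [Ring H] [Algebra k H] {QH : QuasiHopfAlgebra k H}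
  (DT : DrinfeldTwist QH)

theorem comul_mul_twistInv (h : H) : QH.comul h * DT.twistInv =
    DT.twistInv * QH.antipodeSwap (QH.comul (QH.Sinv h)) := by
  have twist_mul_comul := DT.twist_mul_comul_S (QH.Sinv h)
  rw [QH.S_Sinv] at twist_mul_comul
  calc QH.comul h * DT.twistInv
      = DT.twistInv * (DT.twist * QH.comul h) * DT.twistInv := by
        rw [← mul_assoc, DT.twistInv_mul_twist, one_mul]
    _ = DT.twistInv * QH.antipodeSwap (QH.comul (QH.Sinv h)) := by
        rw [twist_mul_comul, mul_assoc, mul_assoc, DT.twist_mul_twistInv, mul_one]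

theorem gammaElt_mul_comul_mul_twistInv (h : H) : QH.gammaElt * QH.comul h * DT.twistInv =
    QH.antipodeSwap (QH.comul (QH.Sinv (QH.aE * h))) := by
  rw [← DT.twist_mul_comul_aE, mul_assoc DT.twist, ← map_mul, mul_assoc, comul_mul_twistInv,
    ← mul_assoc, DT.twist_mul_twistInv, one_mul]

theorem antipodeInvSwap_mul_comul_mul_twistInv (v : H ⊗[k] H) (h : H) :
    QH.antipodeInvSwap (v * QH.comul h * DT.twistInv) =
      QH.comul (QH.Sinv h) * QH.antipodeInvSwap (v * DT.twistInv) := by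
  rw [mul_assoc, comul_mul_twistInv, ← mul_assoc, QH.antipodeInvSwap_mul,
    QH.antipodeInvSwap_antipodeSwap]

/-- The element `∑ S⁻¹(q²_L g²) ⊗ S⁻¹(q¹_L g¹)`, for `f⁻¹ = ∑ g¹ ⊗ g²`. -/
def coactionElt : H ⊗[k] H := QH.antipodeInvSwap (QH.qElt * DT.twistInv)

theorem coactionElt_mul_Sinv_tmul_one (h : H) : DT.coactionElt * QH.Sinv h ⊗ₜ 1 =
    QH.antipodeInvSwap (1 ⊗ₜ h * QH.qElt * DT.twistInv) := by
  rw [mul_assoc, QH.antipodeInvSwap_mul, QH.antipodeInvSwap_tmul, QH.Sinv_one, coactionElt]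

theorem coactionElt_mul_Sinv (h : H) : DT.coactionElt * QH.Sinv h ⊗ₜ 1 =
    QH.rightAct QH.comul includeRight DT.coactionElt (QH.comul h) := by
  rw [coactionElt_mul_Sinv_tmul_one, QH.one_tmul_mul_qElt, QH.evalHead_mul]
  induction QH.comul h using TensorProduct.induction_on with
  | zero => simp
  | add x y hx hy => simp only [map_add, add_mul, hx, hy]
  | tmul a b =>
    rw [onTail_tmul, sandwich_tmul, LinearMap.id_apply, antipodeInvSwap_mul_comul_mul_twistInv,
      mul_assoc _ _ DT.twistInv, QH.antipodeInvSwap_mul]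
    simp [QH.Sinv_one, QH.Sinv_S, coactionElt, QuasiHopfAlgebra.qElt, mul_assoc]

theorem coactionElt_mul_Sinv_aE :
    DT.coactionElt * QH.Sinv QH.aE ⊗ₜ 1 = QH.evalLast QH.reassocInv := by
  rw [coactionElt_mul_Sinv_tmul_one, QH.one_tmul_aE_mul_qElt, QH.evalForm₂_mul,
    ← QuasiHopfAlgebra.gammaElt]
  induction QH.reassocInv using induction_on_three with
  | zero => simp
  | add x y hx hy => simp only [map_add, add_mul, hx, hy]
  | tmul a b c =>
    rw [onTail_tmul, onTail_tmul, Algebra.TensorProduct.assoc_symm_tmul, sandwich_tmul,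
      LinearMap.id_apply, mul_assoc, mul_assoc, ← mul_assoc QH.gammaElt,
      gammaElt_mul_comul_mul_twistInv, ← QH.antipodeSwap_mul, QH.antipodeInvSwap_antipodeSwap,
      QH.evalLast_tmul]

theorem coactionElt_mul_Sinv_aE_mul (c : H) : DT.coactionElt * QH.Sinv (QH.aE * c) ⊗ₜ 1 =
    QH.evalLast (QH.reassocInv * includeRight (QH.comul c)) := by
  have split : QH.Sinv (QH.aE * c) ⊗ₜ[k] (1 : H) = QH.Sinv c ⊗ₜ 1 * QH.Sinv QH.aE ⊗ₜ 1 := by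
    simp [QH.Sinv_mul]
  rw [split, ← mul_assoc, coactionElt_mul_Sinv,
    QH.rightAct_mul_of_commute _ (commute_tmul_one_includeRight _), coactionElt_mul_Sinv_aE,
    QH.evalLast_mul_includeRight]

theorem counitLast_coactionElt : QH.counitLast H DT.coactionElt = 1 := by
  let E : H →ₐ[k] H := (Algebra.ofId k H).comp QH.counit
  have counitLast_comp_comul : (QH.counitLast H).comp QH.comul = AlgHom.id k H :=
    AlgHom.ext QH.counitLast_comul
  have counitLast_comp_includeRight : (QH.counitLast H).comp includeRight = E := by
    ext h
    simp [E, Algebra.ofId_apply, Algebra.algebraMap_eq_smul_one]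
  have rightAct_one (v : H ⊗[k] H) :
      QH.rightAct (AlgHom.id k H) E 1 v = QH.Sinv (QH.counitHead H v) := by
    induction v using TensorProduct.induction_on with
    | zero => simp
    | add x y hx hy => simp only [map_add, hx, hy]
    | tmul a b => simp [E, Algebra.ofId_apply, Algebra.algebraMap_eq_smul_one]
  have counitLast_evalLast (u : H ⊗[k] (H ⊗[k] H)) : QH.counitLast H (QH.evalLast u) =
      QH.rightAct (AlgHom.id k H) (AlgHom.id k H) (QH.Sinv QH.aE)
        (onTail H (QH.counitHead H) u) := by
    induction u using induction_on_three with
    | zero => simp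
    | add x y hx hy => simp only [map_add, hx, hy]
    | tmul a b c => simp [QH.Sinv_mul]
  refine QH.eq_of_mul_Sinv_aE_eq (AlgHom.id k H) (e := AlgHom.id k H) (E := E)
    (fun a b => (Algebra.commutes (QH.counit b) a).symm) (fun h => ?_) (fun h => ?_) ?_
  · simpa [QuasiHopfAlgebra.map_rightAct, counitLast_comp_comul, counitLast_comp_includeRight] using
      congrArg (QH.counitLast H) (DT.coactionElt_mul_Sinv h)
  · simp [rightAct_one]
  · simpa [counitLast_evalLast, Algebra.TensorProduct.one_def, QH.Sinv_one] using
      congrArg (QH.counitLast H) DT.coactionElt_mul_Sinv_aE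

end DrinfeldTwist

namespace QuasiHopfAlgebra

variable {k : Type*} [Field k] {H : Type*} [Ring H] [Algebra k H] (QH : QuasiHopfAlgebra k H)

/-- The iterated coproduct `(id ⊗ Δ) ∘ Δ`. -/
def comul₃ : H →ₐ[k] H ⊗[k] (H ⊗[k] H) := (onTail H QH.comul).comp QH.comul

theorem comul₃_apply (h : H) : QH.comul₃ h = onTail H QH.comul (QH.comul h) := rfl

/-- The form `a ⊗ b ⊗ c ⊗ d ↦ (id ⊗ Δ)(Δ(S⁻¹(α d))) (a ⊗ b ⊗ c)`. -/
def evalLast₃ : H ⊗[k] (H ⊗[k] (H ⊗[k] H)) →ₗ[k] H ⊗[k] (H ⊗[k] H) :=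
  QH.rightAct QH.comul₃ (AlgHom.id k (H ⊗[k] (H ⊗[k] H))) (QH.comul₃ (QH.Sinv QH.aE)) ∘ₗ
    (assocFour k H H H H).symm.toLinearMap

theorem evalLast₃_assocFour (v : (H ⊗[k] (H ⊗[k] H)) ⊗[k] H) :
    QH.evalLast₃ (assocFour k H H H H v) = QH.rightAct QH.comul₃
      (AlgHom.id k (H ⊗[k] (H ⊗[k] H))) (QH.comul₃ (QH.Sinv QH.aE)) v := by
  simp [evalLast₃]

theorem evalLast₃_mul_assocFour (z : H ⊗[k] (H ⊗[k] (H ⊗[k] H)))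
    (v : (H ⊗[k] (H ⊗[k] H)) ⊗[k] H) :
    QH.evalLast₃ (z * assocFour k H H H H v) =
      QH.rightAct QH.comul₃ (AlgHom.id k (H ⊗[k] (H ⊗[k] H))) (QH.evalLast₃ z) v := by
  obtain ⟨u, rfl⟩ := (assocFour k H H H H).surjective z
  rw [← map_mul, evalLast₃_assocFour, evalLast₃_assocFour, rightAct_mul]

theorem evalLast₃_mul_onTail_appendOne (z : H ⊗[k] (H ⊗[k] (H ⊗[k] H)))
    (w : H ⊗[k] (H ⊗[k] H)) :
    QH.evalLast₃ (z * onTail H (appendOne k H H H) w) = QH.evalLast₃ z * w := by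
  rw [← assocFour_tmul_one, evalLast₃_mul_assocFour]
  simp [Sinv_one]

theorem evalLast₃_mul_includeRight (z : H ⊗[k] (H ⊗[k] (H ⊗[k] H))) (u : H ⊗[k] (H ⊗[k] H)) :
    QH.evalLast₃ (z * includeRight u) = QH.rightAct QH.comul₃ includeRight (QH.evalLast₃ z)
      ((Algebra.TensorProduct.assoc k k k H H H).symm u) := by
  induction u using induction_on_three with
  | zero => simp
  | add x y hx hy => simp only [map_add, mul_add, hx, hy]
  | tmul a b c => exact QH.evalLast₃_mul_assocFour z ((1 ⊗ₜ (a ⊗ₜ b)) ⊗ₜ c)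

theorem evalLast₃_onTail_appendOne (w : H ⊗[k] (H ⊗[k] H)) :
    QH.evalLast₃ (onTail H (appendOne k H H H) w) = QH.comul₃ (QH.Sinv QH.aE) * w := by
  rw [← assocFour_tmul_one, evalLast₃_assocFour]
  simp [Sinv_one]

theorem reassoc_mul_onHead_evalLast (u : H ⊗[k] (H ⊗[k] H)) :
    QH.reassoc * onHead H QH.comul (QH.evalLast u) =
      QH.evalLast₃ (onTail H (appendOne k H H H) QH.reassoc * onHead (H ⊗[k] H) QH.comul u) := by
  obtain ⟨v, rfl⟩ := (TensorProduct.assoc k H H H).surjective u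
  induction v using TensorProduct.induction_on with
  | zero => simp
  | add x y hx hy => simp only [map_add, mul_add, hx, hy]
  | tmul w c =>
    rw [evalLast_assoc_tmul, map_mul, ← mul_assoc, ← QH.onTail_comul_mul_reassoc, ← comul₃_apply,
      ← assocFour_onHead_tmul, evalLast₃_mul_assocFour, evalLast₃_onTail_appendOne, rightAct_tmul,
      AlgHom.id_apply, ← mul_assoc (QH.comul₃ _), ← map_mul, ← Sinv_mul]

theorem evalLast₃_onTail_onHead_comul (u : H ⊗[k] (H ⊗[k] H)) :
    QH.evalLast₃ (onTail H (onHead H QH.comul) u) = onTail H QH.comul (QH.evalLast u) := by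
  obtain ⟨v, rfl⟩ := (TensorProduct.assoc k H H H).surjective u
  induction v using TensorProduct.induction_on with
  | zero => simp
  | add x y hx hy => simp only [map_add, hx, hy]
  | tmul w c =>
    rw [← assocFour_onTail_tmul, evalLast₃_assocFour, rightAct_tmul, AlgHom.id_apply, ← map_mul,
      ← Sinv_mul, evalLast_assoc_tmul, map_mul (onTail H QH.comul), comul₃_apply]

end QuasiHopfAlgebra

namespace DrinfeldTwist

variable {k : Type*} [Field k] {H : Type*} [Ring H] [Algebra k H] {QH : QuasiHopfAlgebra k H}
  (DT : DrinfeldTwist QH)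

/-- The element `Φ (Δ ⊗ id)(W) (W ⊗ 1)`, for `W` the element `coactionElt`. -/
def coactionElt₃ : H ⊗[k] (H ⊗[k] H) :=
  QH.reassoc * onHead H QH.comul DT.coactionElt * appendOne k H H H DT.coactionElt

/-- The form `a ⊗ b ⊗ c ↦ (id ⊗ Δ)(Δ(S⁻¹(c))) W₃ (1 ⊗ a ⊗ b)`, for `W₃` the element
`coactionElt₃`. -/
def coactionForm : H ⊗[k] (H ⊗[k] H) →ₗ[k] H ⊗[k] (H ⊗[k] H) :=
  QH.rightAct QH.comul₃ includeRight DT.coactionElt₃ ∘ₗ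
    (Algebra.TensorProduct.assoc k k k H H H).symm.toLinearMap

theorem coactionForm_apply (u : H ⊗[k] (H ⊗[k] H)) : DT.coactionForm u =
    QH.rightAct QH.comul₃ includeRight DT.coactionElt₃
      ((Algebra.TensorProduct.assoc k k k H H H).symm u) := rfl

theorem coactionForm_mul (u w : H ⊗[k] (H ⊗[k] H)) : DT.coactionForm (u * w) =
    QH.rightAct QH.comul₃ includeRight (DT.coactionForm u)
      ((Algebra.TensorProduct.assoc k k k H H H).symm w) := by
  rw [coactionForm_apply, coactionForm_apply, map_mul, QH.rightAct_mul]

theorem coactionForm_mul_onHead_comul (u : H ⊗[k] (H ⊗[k] H)) (v : H ⊗[k] H) :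
    DT.coactionForm (u * onHead H QH.comul v) =
      QH.rightAct QH.comul₃ (includeRight.comp QH.comul) (DT.coactionForm u) v := by
  rw [coactionForm_mul]
  induction v using TensorProduct.induction_on with
  | zero => simp
  | add x y hx hy => simp only [map_add, hx, hy]
  | tmul a b =>
    rw [onHead_tmul]
    exact congrArg _ ((TensorProduct.assoc k H H H).symm_apply_apply _)

theorem reassoc_mul_onHead_coactionElt_mul_appendOne (h : H) :
    QH.reassoc * onHead H QH.comul DT.coactionElt *
        appendOne k H H H (QH.comul (QH.Sinv h) * DT.coactionElt) =
      DT.coactionForm (includeRight (QH.comul h)) := by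
  have onHead_comp_includeRight : (onHead H QH.comul).comp includeRight =
      (includeRight : H ⊗[k] H →ₐ[k] H ⊗[k] (H ⊗[k] H)).comp includeRight :=
    AlgHom.ext (onHead_includeRight QH.comul)
  have onHead_mul_appendOne : onHead H QH.comul DT.coactionElt *
      appendOne k H H H (QH.comul (QH.Sinv h)) =
        onHead H QH.comul (QH.rightAct QH.comul includeRight DT.coactionElt (QH.comul h)) := by
    rw [← onHead_tmul_one, ← map_mul (onHead H QH.comul), coactionElt_mul_Sinv]
  rw [map_mul (appendOne k H H H), ← mul_assoc, mul_assoc QH.reassoc, onHead_mul_appendOne,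
    QH.map_rightAct, QH.rightAct_mul_left (D' := QH.comul₃)
      (fun a => (QH.onTail_comul_mul_reassoc a).symm), onHead_comp_includeRight,
    QH.rightAct_mul_of_commute _ (commute_appendOne_includeRight DT.coactionElt),
    coactionForm_apply, QH.rightAct_assoc_symm_includeRight, coactionElt₃]

theorem coactionElt₃_mul_Sinv (h : H) : DT.coactionElt₃ * QH.Sinv h ⊗ₜ 1 =
    DT.coactionForm (onTail H QH.comul (QH.comul h)) := by
  rw [Algebra.TensorProduct.one_def, ← appendOne_tmul, coactionElt₃, mul_assoc, ← map_mul,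
    coactionElt_mul_Sinv]
  induction QH.comul h using TensorProduct.induction_on with
  | zero => simp
  | add x y hx hy => simp only [map_add, mul_add, hx, hy]
  | tmul a b =>
    have split : a ⊗ₜ[k] QH.comul b = includeRight (QH.comul b) * a ⊗ₜ 1 := by simp
    rw [QH.rightAct_tmul, map_mul, ← mul_assoc, reassoc_mul_onHead_coactionElt_mul_appendOne,
      onTail_tmul, split, coactionForm_mul]
    rw [Algebra.TensorProduct.one_def, Algebra.TensorProduct.assoc_symm_tmul, QH.rightAct_tmul,
      QH.Sinv_one, map_one, one_mul]
    simp only [Algebra.TensorProduct.includeRight_apply, appendOne_tmul]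

theorem coactionForm_mul_Sinv (u : H ⊗[k] (H ⊗[k] H)) (h : H) :
    DT.coactionForm u * QH.Sinv h ⊗ₜ 1 =
      DT.coactionForm (onTail H QH.comul (QH.comul h) * u) := by
  rw [coactionForm_mul, ← coactionElt₃_mul_Sinv, coactionForm_apply,
    QH.rightAct_mul_of_commute _ (commute_tmul_one_includeRight (QH.Sinv h))]

theorem reassoc_mul_onHead_coactionElt_mul_appendOne_evalLast (u : H ⊗[k] (H ⊗[k] H)) :
    QH.reassoc * onHead H QH.comul DT.coactionElt * appendOne k H H H (QH.evalLast u) =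
      QH.evalLast₃ (QH.gammaTensor * onTail H (onTail H QH.comul) u) := by
  induction u using induction_on_three with
  | zero => simp
  | add x y hx hy => simp only [map_add, mul_add, hx, hy]
  | tmul a b c =>
    have split : onTail H (onTail H QH.comul) (a ⊗ₜ (b ⊗ₜ c)) =
        onHead (H ⊗[k] H) QH.comul (includeRight (QH.comul c)) *
          onTail H (appendOne k H H H) (appendOne k H H H (a ⊗ₜ b)) := by
      rw [onHead_includeRight]
      simp [← Algebra.TensorProduct.one_def]
    have onHead_mul_appendOne : onHead H QH.comul DT.coactionElt *
        appendOne k H H H (QH.comul (QH.Sinv (QH.aE * c))) =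
          onHead H QH.comul (QH.evalLast (QH.reassocInv * includeRight (QH.comul c))) := by
      rw [← coactionElt_mul_Sinv_aE_mul, map_mul (onHead H QH.comul), onHead_tmul_one]
    rw [QH.evalLast_tmul, map_mul (appendOne k H H H), ← mul_assoc, mul_assoc QH.reassoc,
      onHead_mul_appendOne, QH.reassoc_mul_onHead_evalLast, ← QH.evalLast₃_mul_onTail_appendOne,
      split, map_mul (onHead (H ⊗[k] H) QH.comul), QuasiHopfAlgebra.gammaTensor]
    simp only [mul_assoc]

theorem coactionElt₃_mul_Sinv_aE : DT.coactionElt₃ * QH.Sinv QH.aE ⊗ₜ 1 =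
    QH.evalLast₃ (QH.gammaTensor * onTail H (onTail H QH.comul) QH.reassocInv) := by
  rw [← reassoc_mul_onHead_coactionElt_mul_appendOne_evalLast, ← coactionElt_mul_Sinv_aE, map_mul,
    ← mul_assoc, coactionElt₃, appendOne_tmul, Algebra.TensorProduct.one_def]

theorem coactionForm_mul_Sinv_aE (u : H ⊗[k] (H ⊗[k] H)) :
    DT.coactionForm u * QH.Sinv QH.aE ⊗ₜ 1 =
      QH.evalLast₃ (QH.gammaTensor * onTail H (onTail H QH.comul) QH.reassocInv *
        includeRight u) := by
  rw [coactionForm_apply, QH.rightAct_mul_of_commute _ (commute_tmul_one_includeRight _),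
    coactionElt₃_mul_Sinv_aE, QH.evalLast₃_mul_includeRight]

theorem coactionForm_reassoc :
    DT.coactionForm QH.reassoc = onTail H QH.comul DT.coactionElt := by
  have onTail_comul_mul (h : H) : onTail H QH.comul DT.coactionElt * h ⊗ₜ 1 =
      onTail H QH.comul (DT.coactionElt * h ⊗ₜ 1) := by
    rw [map_mul (onTail H QH.comul), onTail_tmul, map_one]
  refine QH.eq_of_mul_Sinv_aE_eq QH.comul₃ (e := includeLeft) (E := includeRight.comp QH.comul)
    (fun a b => commute_tmul_one_includeRight a (QH.comul b)) (fun h => ?_) (fun h => ?_) ?_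
  · rw [Algebra.TensorProduct.includeLeft_apply, coactionForm_mul_Sinv,
      QH.onTail_comul_mul_reassoc, coactionForm_mul_onHead_comul]
  · rw [Algebra.TensorProduct.includeLeft_apply, onTail_comul_mul, coactionElt_mul_Sinv,
      QH.map_rightAct]
    rfl
  · rw [Algebra.TensorProduct.includeLeft_apply, onTail_comul_mul, coactionElt_mul_Sinv_aE,
      coactionForm_mul_Sinv_aE, ← QH.evalLast₃_onTail_onHead_comul,
      ← QH.pentagon_reassocInv_mul_includeRight, QuasiHopfAlgebra.gammaTensor]

end DrinfeldTwist

namespace TensorLegs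

variable {k : Type*} [CommSemiring k] (H A C : Type*) [Semiring H] [Algebra k H] [Semiring A]
  [Algebra k A] [Semiring C] [Algebra k C]

/-- The inclusion `h ⊗ c ↦ (h ⊗ 1) ⊗ c` of the legs `H` and `C` into `(H ⊗ A) ⊗ C`. -/
def leftLegs : H ⊗[k] C →ₐ[k] (H ⊗[k] A) ⊗[k] C :=
  Algebra.TensorProduct.map includeLeft (AlgHom.id k C)

/-- The inclusion `a ⊗ c ↦ (1 ⊗ a) ⊗ c` of the legs `A` and `C` into `(H ⊗ A) ⊗ C`. -/
def rightLegs : A ⊗[k] C →ₐ[k] (H ⊗[k] A) ⊗[k] C :=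
  Algebra.TensorProduct.map includeRight (AlgHom.id k C)

variable {H A C}

@[simp] theorem leftLegs_tmul (h : H) (c : C) :
    leftLegs H A C (h ⊗ₜ[k] c) = (h ⊗ₜ 1) ⊗ₜ c := rfl

@[simp] theorem rightLegs_tmul (a : A) (c : C) :
    rightLegs H A C (a ⊗ₜ[k] c) = (1 ⊗ₜ a) ⊗ₜ c := rfl

theorem leftLegs_tmul_mul (h : H) (c : C) (x : (H ⊗[k] A) ⊗[k] C) :
    leftLegs H A C (h ⊗ₜ c) * x =
      TensorProduct.map (LinearMap.mulLeft k (h ⊗ₜ 1)) (LinearMap.mulLeft k c) x := by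
  rw [← LinearMap.mulLeft_tmul, leftLegs_tmul, LinearMap.mulLeft_apply]

theorem mul_rightLegs_tmul (x : (H ⊗[k] A) ⊗[k] C) (a : A) (c : C) :
    x * rightLegs H A C (a ⊗ₜ c) =
      TensorProduct.map (LinearMap.mulRight k (1 ⊗ₜ a)) (LinearMap.mulRight k c) x := by
  rw [← LinearMap.mulRight_tmul, rightLegs_tmul, LinearMap.mulRight_apply]

variable {D : Type*} [Semiring D] [Algebra k D]

theorem onTail_leftLegs (δ : C →ₐ[k] D) (v : H ⊗[k] C) :
    onTail (H ⊗[k] A) δ (leftLegs H A C v) = leftLegs H A D (onTail H δ v) := by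
  induction v using TensorProduct.induction_on with
  | zero => simp
  | add x y hx hy => simp only [map_add, hx, hy]
  | tmul p q => simp

theorem onTail_rightLegs (δ : C →ₐ[k] D) (v : A ⊗[k] C) :
    onTail (H ⊗[k] A) δ (rightLegs H A C v) = rightLegs H A D (onTail A δ v) := by
  induction v using TensorProduct.induction_on with
  | zero => simp
  | add x y hx hy => simp only [map_add, hx, hy]
  | tmul p q => simp

theorem assoc_leftLegs_tmul (v : H ⊗[k] C) (d : D) :
    Algebra.TensorProduct.assoc k k k (H ⊗[k] A) C D (leftLegs H A C v ⊗ₜ d) =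
      leftLegs H A (C ⊗[k] D) (TensorProduct.assoc k H C D (v ⊗ₜ d)) := by
  induction v using TensorProduct.induction_on with
  | zero => simp
  | add x y hx hy => simp only [map_add, add_tmul, hx, hy]
  | tmul p q => rfl

theorem assoc_rightLegs_tmul (v : A ⊗[k] C) (d : D) :
    Algebra.TensorProduct.assoc k k k (H ⊗[k] A) C D (rightLegs H A C v ⊗ₜ d) =
      rightLegs H A (C ⊗[k] D) (TensorProduct.assoc k A C D (v ⊗ₜ d)) := by
  induction v using TensorProduct.induction_on with
  | zero => simp
  | add x y hx hy => simp only [map_add, add_tmul, hx, hy]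
  | tmul p q => rfl

end TensorLegs

namespace RightComoduleAlgebra

variable {k : Type*} [Field k] {H : Type*} [Ring H] [Algebra k H] {QB : QuasiBialgebra k H}
  {A : Type*} [Ring A] [Algebra k A] (CA : RightComoduleAlgebra QB A)

/-- The reassociator `Φ_ρ` of a right comodule algebra, as an element of `A ⊗ (H ⊗ H)`. -/
def reassoc : A ⊗[k] (H ⊗[k] H) :=
  ∑ s ∈ range CA.nP, CA.P1 s ⊗ₜ (CA.P2 s ⊗ₜ CA.P3 s)

theorem reassoc_mul_onHead_rho (a : A) : CA.reassoc * onHead H CA.rho (CA.rho a) =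
    onTail A QB.comul (CA.rho a) * CA.reassoc := by
  have sweedler := CA.rca1 a
  simp only [reassoc, CA.hrho, QB.hcomul, map_sum, onHead_tmul, onTail_tmul, sum_tmul,
    tmul_sum, assoc_tmul, Algebra.TensorProduct.tmul_mul_tmul, Finset.sum_mul, Finset.mul_sum]
  exact (sum_rotate_three _ _ _ _).symm.trans (sweedler.trans (sum_rotate_three _ _ _ _).symm)

theorem pentagon_reassoc :
    includeRight QB.reassoc * onTail A (onHead H QB.comul) CA.reassoc *
        onTail A (appendOne k H H H) CA.reassoc =
      onTail A (onTail H QB.comul) CA.reassoc * onHead (H ⊗[k] H) CA.rho CA.reassoc := by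
  have sweedler := CA.rca2
  simp only [reassoc, QuasiBialgebra.reassoc, QB.hcomul, CA.hrho, map_sum, onTail_tmul,
    Algebra.TensorProduct.includeRight_apply, onHead_tmul, sum_tmul, tmul_sum, assoc_tmul,
    appendOne_tmul, Finset.sum_mul, Finset.mul_sum, Algebra.TensorProduct.tmul_mul_tmul, one_mul,
    mul_one]
  exact (sum_swap_outer_inner _ _ _ _ _).trans
    (sweedler.trans ((sum_rotate_four _ _ _ _ _).trans (sum_rotate_four _ _ _ _ _)))

theorem onTail_counitHead_reassoc : onTail A (QB.counitHead H) CA.reassoc = 1 := by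
  rw [Algebra.TensorProduct.one_def, ← CA.rca4a]
  simp [reassoc, tmul_smul]

theorem counitLast_rho (a : A) : QB.counitLast A (CA.rho a) = a := by
  simpa [CA.hrho] using CA.rca3 a

end RightComoduleAlgebra

namespace QuasiBialgebra

variable {k : Type*} [Field k] {H : Type*} [Ring H] [Algebra k H] (QB : QuasiBialgebra k H)
  {A : Type*} [Ring A] [Algebra k A]

theorem counitLast_leftLegs (v : H ⊗[k] H) :
    QB.counitLast (H ⊗[k] A) (leftLegs H A H v) = QB.counitLast H v ⊗ₜ 1 := by
  induction v using TensorProduct.induction_on with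
  | zero => simp
  | add x y hx hy => simp only [map_add, add_tmul, hx, hy]
  | tmul p q => simp [smul_tmul']

theorem counitLast_rightLegs (v : A ⊗[k] H) :
    QB.counitLast (H ⊗[k] A) (rightLegs H A H v) = 1 ⊗ₜ QB.counitLast A v := by
  induction v using TensorProduct.induction_on with
  | zero => simp
  | add x y hx hy => simp only [map_add, tmul_add, hx, hy]
  | tmul p q => simp [tmul_smul]

end QuasiBialgebra

namespace RightComoduleAlgebra

variable {k : Type*} [Field k] {H : Type*} [Ring H] [Algebra k H] {QB : QuasiBialgebra k H}
  {A : Type*} [Ring A] [Algebra k A] (CA : RightComoduleAlgebra QB A) (Ω : (H ⊗[k] A) ⊗[k] H)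

/-- The map `h ⊗ a ↦ Δ(h) Ω ρ(a)` on `H ⊗ A`. These are exactly the maps `H ⊗ A → (H ⊗ A) ⊗ H`
compatible with the actions by multiplication of `H` on the left and of `A` on the right. -/
def tensorCoaction : H ⊗[k] A →ₗ[k] (H ⊗[k] A) ⊗[k] H :=
  sandwich ((leftLegs H A H).comp QB.comul).toLinearMap Ω
    ((rightLegs H A H).comp CA.rho).toLinearMap

theorem tensorCoaction_tmul (h : H) (a : A) : CA.tensorCoaction Ω (h ⊗ₜ a) =
    leftLegs H A H (QB.comul h) * Ω * rightLegs H A H (CA.rho a) := rfl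

theorem tensorCoaction_one : CA.tensorCoaction Ω 1 = Ω := by
  rw [Algebra.TensorProduct.one_def, tensorCoaction_tmul]
  simp

theorem tensorCoaction_tmul_one_mul (h : H) (m : H ⊗[k] A) :
    CA.tensorCoaction Ω (h ⊗ₜ 1 * m) =
      leftLegs H A H (QB.comul h) * CA.tensorCoaction Ω m :=
  sandwich_tmul_one_mul (map_mul ((leftLegs H A H).comp QB.comul)) _ _ _ _

theorem tensorCoaction_mul_one_tmul (m : H ⊗[k] A) (a : A) :
    CA.tensorCoaction Ω (m * 1 ⊗ₜ a) =
      CA.tensorCoaction Ω m * rightLegs H A H (CA.rho a) :=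
  sandwich_mul_one_tmul (map_mul ((rightLegs H A H).comp CA.rho)) _ _ _ _

/-- The map `m ⊗ h ↦ ρ(m) ⊗ h`, in right-nested form, for `ρ` the map `tensorCoaction`. -/
def tensorCoactionHead : (H ⊗[k] A) ⊗[k] H →ₗ[k] (H ⊗[k] A) ⊗[k] (H ⊗[k] H) :=
  (TensorProduct.assoc k (H ⊗[k] A) H H).toLinearMap ∘ₗ
    TensorProduct.map (CA.tensorCoaction Ω) LinearMap.id

theorem tensorCoactionHead_tmul (m : H ⊗[k] A) (h : H) : CA.tensorCoactionHead Ω (m ⊗ₜ h) =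
    Algebra.TensorProduct.assoc k k k (H ⊗[k] A) H H (CA.tensorCoaction Ω m ⊗ₜ h) := rfl

theorem tensorCoactionHead_one : CA.tensorCoactionHead Ω 1 = appendOne k (H ⊗[k] A) H H Ω := by
  rw [Algebra.TensorProduct.one_def, tensorCoactionHead_tmul, tensorCoaction_one]
  exact onHead_tmul_one (D := H) (AlgHom.id k ((H ⊗[k] A) ⊗[k] H)) Ω

theorem tensorCoactionHead_leftLegs_mul (v : H ⊗[k] H) (x : (H ⊗[k] A) ⊗[k] H) :
    CA.tensorCoactionHead Ω (leftLegs H A H v * x) =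
      leftLegs H A (H ⊗[k] H) (onHead H QB.comul v) * CA.tensorCoactionHead Ω x := by
  induction v using TensorProduct.induction_on with
  | zero => simp
  | add x y hx hy => simp only [map_add, add_mul, hx, hy]
  | tmul p q =>
    induction x using TensorProduct.induction_on with
    | zero => simp
    | add x y hx hy => simp only [map_add, mul_add, hx, hy]
    | tmul m c =>
      rw [leftLegs_tmul, Algebra.TensorProduct.tmul_mul_tmul, tensorCoactionHead_tmul,
        tensorCoaction_tmul_one_mul, ← Algebra.TensorProduct.tmul_mul_tmul, map_mul,
        assoc_leftLegs_tmul, onHead_tmul, tensorCoactionHead_tmul]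

theorem tensorCoactionHead_mul_rightLegs (x : (H ⊗[k] A) ⊗[k] H) (v : A ⊗[k] H) :
    CA.tensorCoactionHead Ω (x * rightLegs H A H v) =
      CA.tensorCoactionHead Ω x * rightLegs H A (H ⊗[k] H) (onHead H CA.rho v) := by
  induction v using TensorProduct.induction_on with
  | zero => simp
  | add x y hx hy => simp only [map_add, mul_add, hx, hy]
  | tmul p q =>
    induction x using TensorProduct.induction_on with
    | zero => simp
    | add x y hx hy => simp only [map_add, add_mul, hx, hy]
    | tmul m c =>
      rw [rightLegs_tmul, Algebra.TensorProduct.tmul_mul_tmul, tensorCoactionHead_tmul,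
        tensorCoaction_mul_one_tmul, ← Algebra.TensorProduct.tmul_mul_tmul, map_mul,
        assoc_rightLegs_tmul, onHead_tmul, tensorCoactionHead_tmul]

variable {Ω}

theorem counitLast_tensorCoaction (hΩ : QB.counitLast (H ⊗[k] A) Ω = 1) (m : H ⊗[k] A) :
    QB.counitLast (H ⊗[k] A) (CA.tensorCoaction Ω m) = m := by
  induction m using TensorProduct.induction_on with
  | zero => simp
  | add x y hx hy => simp only [map_add, hx, hy]
  | tmul h a =>
    rw [tensorCoaction_tmul, map_mul, map_mul, QB.counitLast_leftLegs, QB.counitLast_rightLegs,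
      hΩ, CA.counitLast_rho, QB.counitLast_comul]
    simp

theorem reassoc_mul_tensorCoactionHead_tensorCoaction
    (hΩ : leftLegs H A (H ⊗[k] H) QB.reassoc * CA.tensorCoactionHead Ω Ω =
      onTail (H ⊗[k] A) QB.comul Ω * rightLegs H A (H ⊗[k] H) CA.reassoc) (m : H ⊗[k] A) :
    leftLegs H A (H ⊗[k] H) QB.reassoc * CA.tensorCoactionHead Ω (CA.tensorCoaction Ω m) =
      onTail (H ⊗[k] A) QB.comul (CA.tensorCoaction Ω m) *
        rightLegs H A (H ⊗[k] H) CA.reassoc := by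
  induction m using TensorProduct.induction_on with
  | zero => simp
  | add x y hx hy => simp only [map_add, mul_add, add_mul, hx, hy]
  | tmul h a =>
    let L : H ⊗[k] (H ⊗[k] H) →ₐ[k] _ := leftLegs H A (H ⊗[k] H)
    let R : A ⊗[k] (H ⊗[k] H) →ₐ[k] _ := rightLegs H A (H ⊗[k] H)
    calc L QB.reassoc * CA.tensorCoactionHead Ω (CA.tensorCoaction Ω (h ⊗ₜ a))
        = L (QB.reassoc * onHead H QB.comul (QB.comul h)) * CA.tensorCoactionHead Ω Ω *
            R (onHead H CA.rho (CA.rho a)) := by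
          rw [tensorCoaction_tmul, tensorCoactionHead_mul_rightLegs,
            tensorCoactionHead_leftLegs_mul, map_mul L]
          simp only [L, R, mul_assoc]
      _ = L (onTail H QB.comul (QB.comul h)) * (L QB.reassoc * CA.tensorCoactionHead Ω Ω) *
            R (onHead H CA.rho (CA.rho a)) := by
          rw [← QB.onTail_comul_mul_reassoc, map_mul L]
          simp only [mul_assoc]
      _ = L (onTail H QB.comul (QB.comul h)) * onTail (H ⊗[k] A) QB.comul Ω *
            R (CA.reassoc * onHead H CA.rho (CA.rho a)) := by
          rw [hΩ, map_mul R]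
          simp only [R, mul_assoc]
      _ = onTail (H ⊗[k] A) QB.comul (CA.tensorCoaction Ω (h ⊗ₜ a)) * R CA.reassoc := by
          rw [CA.reassoc_mul_onHead_rho, tensorCoaction_tmul,
            map_mul (onTail (H ⊗[k] A) QB.comul), map_mul (onTail (H ⊗[k] A) QB.comul),
            onTail_leftLegs, onTail_rightLegs, map_mul R]
          simp only [L, R, mul_assoc]

/-- The two-sided Hopf module `H ⊗ A`, with the actions by multiplication and the coaction
`tensorCoaction`. The coassociativity and counit axioms reduce to the case `m = 1`. -/
def tensorHopfModule (counit_Ω : QB.counitLast (H ⊗[k] A) Ω = 1)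
    (coassoc_Ω : leftLegs H A (H ⊗[k] H) QB.reassoc * CA.tensorCoactionHead Ω Ω =
      onTail (H ⊗[k] A) QB.comul Ω * rightLegs H A (H ⊗[k] H) CA.reassoc) :
    TwoSidedHopfModule QB CA (H ⊗[k] A) where
  ha := LinearMap.mul k (H ⊗[k] A) ∘ₗ includeLeft.toLinearMap
  ha_one m := by simp [← Algebra.TensorProduct.one_def]
  ha_mul g h m := by simp [← mul_assoc]
  ra := (LinearMap.mul k (H ⊗[k] A)).flip ∘ₗ includeRight.toLinearMap
  ra_one m := by simp [← Algebra.TensorProduct.one_def]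
  ra_mul a b m := by simp [mul_assoc]
  ha_ra h a m := by simp [mul_assoc]
  rho := CA.tensorCoaction Ω
  counit_rho m := CA.counitLast_tensorCoaction counit_Ω m
  coassoc_rho m := by
    have coassoc := CA.reassoc_mul_tensorCoactionHead_tensorCoaction coassoc_Ω m
    simp only [QuasiBialgebra.reassoc, reassoc, map_sum, Finset.sum_mul, Finset.mul_sum,
      leftLegs_tmul_mul, mul_rightLegs_tmul] at coassoc
    simp only [← LinearMap.mulLeft_tmul, ← LinearMap.mulRight_tmul]
    exact coassoc
  colin_l h m := by
    have colin := CA.tensorCoaction_tmul_one_mul Ω h m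
    simp only [QB.hcomul, map_sum, Finset.sum_mul, leftLegs_tmul_mul] at colin
    exact colin
  colin_r a m := by
    have colin := CA.tensorCoaction_mul_one_tmul Ω m a
    simp only [CA.hrho, map_sum, Finset.mul_sum, mul_rightLegs_tmul] at colin
    exact colin

end RightComoduleAlgebra

namespace DrinfeldTwist

variable {k : Type*} [Field k] {H : Type*} [Ring H] [Algebra k H] {QH : QuasiHopfAlgebra k H}
  (DT : DrinfeldTwist QH)

section TensorForm

variable (A : Type*) [Ring A] [Algebra k A]

/-- The form `a ⊗ b ⊗ c ↦ Δ(S⁻¹(c)) W (a ⊗ b)` with values in `(H ⊗ A) ⊗ H`, for `W` the element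
`coactionElt`. -/
def tensorForm : A ⊗[k] (H ⊗[k] H) →ₗ[k] (H ⊗[k] A) ⊗[k] H :=
  QH.rightAct ((leftLegs H A H).comp QH.comul) (rightLegs H A H)
      (leftLegs H A H DT.coactionElt) ∘ₗ
    (Algebra.TensorProduct.assoc k k k A H H).symm.toLinearMap

/-- The form `a ⊗ b ⊗ c ⊗ d ↦ (id ⊗ Δ)(Δ(S⁻¹(d))) W₃ (a ⊗ b ⊗ c)` with values in
`(H ⊗ A) ⊗ (H ⊗ H)`, for `W₃` the element `coactionElt₃`. -/
def tensorForm₃ : A ⊗[k] (H ⊗[k] (H ⊗[k] H)) →ₗ[k] (H ⊗[k] A) ⊗[k] (H ⊗[k] H) :=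
  QH.rightAct ((leftLegs H A (H ⊗[k] H)).comp QH.comul₃) (rightLegs H A (H ⊗[k] H))
      (leftLegs H A (H ⊗[k] H) DT.coactionElt₃) ∘ₗ
    (assocFour k A H H H).symm.toLinearMap

variable {A}

theorem tensorForm_assoc_tmul (v : A ⊗[k] H) (c : H) :
    DT.tensorForm A (TensorProduct.assoc k A H H (v ⊗ₜ c)) =
      leftLegs H A H (QH.comul (QH.Sinv c) * DT.coactionElt) * rightLegs H A H v := by
  rw [map_mul]
  exact congrArg (QH.rightAct ((leftLegs H A H).comp QH.comul) (rightLegs H A H)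
    (leftLegs H A H DT.coactionElt)) ((TensorProduct.assoc k A H H).symm_apply_apply (v ⊗ₜ c))

theorem counitLast_tensorForm (u : A ⊗[k] (H ⊗[k] H)) :
    QH.counitLast (H ⊗[k] A) (DT.tensorForm A u) =
      QH.rightAct includeLeft includeRight 1 (onTail A (QH.counitHead H) u) := by
  induction u using induction_on_three with
  | zero => simp
  | add x y hx hy => simp only [map_add, hx, hy]
  | tmul a b c =>
    rw [← TensorProduct.assoc_tmul, tensorForm_assoc_tmul, map_mul, QH.counitLast_leftLegs,
      QH.counitLast_rightLegs, map_mul, QH.counitLast_comul, counitLast_coactionElt]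
    simp [tmul_smul]

theorem tensorForm₃_assocFour (v : (A ⊗[k] (H ⊗[k] H)) ⊗[k] H) :
    DT.tensorForm₃ A (assocFour k A H H H v) =
      QH.rightAct ((leftLegs H A (H ⊗[k] H)).comp QH.comul₃) (rightLegs H A (H ⊗[k] H))
        (leftLegs H A (H ⊗[k] H) DT.coactionElt₃) v := by
  simp [tensorForm₃]

theorem tensorForm₃_mul_assocFour_tmul (z : A ⊗[k] (H ⊗[k] (H ⊗[k] H)))
    (w : A ⊗[k] (H ⊗[k] H)) (d : H) :
    DT.tensorForm₃ A (z * assocFour k A H H H (w ⊗ₜ d)) =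
      leftLegs H A (H ⊗[k] H) (QH.comul₃ (QH.Sinv d)) * DT.tensorForm₃ A z *
        rightLegs H A (H ⊗[k] H) w := by
  obtain ⟨u, rfl⟩ := (assocFour k A H H H).surjective z
  rw [← map_mul, tensorForm₃_assocFour, tensorForm₃_assocFour, QH.rightAct_mul, QH.rightAct_tmul,
    AlgHom.comp_apply]

theorem tensorForm₃_mul_onTail_appendOne (z : A ⊗[k] (H ⊗[k] (H ⊗[k] H)))
    (w : A ⊗[k] (H ⊗[k] H)) :
    DT.tensorForm₃ A (z * onTail A (appendOne k H H H) w) =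
      DT.tensorForm₃ A z * rightLegs H A (H ⊗[k] H) w := by
  rw [← assocFour_tmul_one, tensorForm₃_mul_assocFour_tmul, QH.Sinv_one, map_one, map_one,
    one_mul]

theorem tensorForm₃_includeRight (w : H ⊗[k] (H ⊗[k] H)) :
    DT.tensorForm₃ A (includeRight w) = leftLegs H A (H ⊗[k] H) (DT.coactionForm w) := by
  induction w using induction_on_three with
  | zero => simp
  | add x y hx hy => simp only [map_add, hx, hy]
  | tmul a b c =>
    rw [Algebra.TensorProduct.includeRight_apply, ← assocFour_tmul, tensorForm₃_assocFour,
      coactionForm_apply, QH.map_rightAct]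
    rfl

theorem tensorForm₃_includeRight_reassoc_mul (u : A ⊗[k] (H ⊗[k] H)) :
    DT.tensorForm₃ A (includeRight QH.reassoc * onTail A (onHead H QH.comul) u) =
      onTail (H ⊗[k] A) QH.comul (DT.tensorForm A u) := by
  obtain ⟨v, rfl⟩ := (TensorProduct.assoc k A H H).surjective u
  induction v using TensorProduct.induction_on with
  | zero => simp
  | add x y hx hy => simp only [map_add, mul_add, hx, hy]
  | tmul v c =>
    rw [← assocFour_onTail_tmul, tensorForm₃_mul_assocFour_tmul, tensorForm₃_includeRight,
      coactionForm_reassoc, tensorForm_assoc_tmul, map_mul (onTail (H ⊗[k] A) QH.comul),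
      onTail_leftLegs, onTail_rightLegs, map_mul (onTail H QH.comul), map_mul,
      QH.comul₃_apply]

theorem leftLegs_mul_appendOne_tensorForm (u : A ⊗[k] (H ⊗[k] H)) :
    leftLegs H A (H ⊗[k] H) (QH.reassoc * onHead H QH.comul DT.coactionElt) *
        appendOne k (H ⊗[k] A) H H (DT.tensorForm A u) =
      DT.tensorForm₃ A (onTail A (onTail H QH.comul) u) := by
  induction u using induction_on_three with
  | zero => simp
  | add x y hx hy => simp only [map_add, mul_add, hx, hy]
  | tmul a b c =>
    have split : onTail A (onTail H QH.comul) (a ⊗ₜ (b ⊗ₜ c)) =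
        includeRight (includeRight (QH.comul c)) *
          onTail A (appendOne k H H H) (appendOne k A H H (a ⊗ₜ b)) := by
      simp [← Algebra.TensorProduct.one_def]
    rw [split, tensorForm₃_mul_onTail_appendOne, tensorForm₃_includeRight,
      ← reassoc_mul_onHead_coactionElt_mul_appendOne, ← TensorProduct.assoc_tmul,
      tensorForm_assoc_tmul, map_mul (appendOne k (H ⊗[k] A) H H), appendOne, onTail_leftLegs,
      onTail_rightLegs, ← mul_assoc, ← map_mul]
    rfl

end TensorForm

variable {A : Type*} [Ring A] [Algebra k A] (CA : RightComoduleAlgebra QH.toQuasiBialgebra A)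

/-- The element `∑ Δ(S⁻¹(X̃³)) W (X̃¹ ⊗ X̃²)` of `(H ⊗ A) ⊗ H`, for `W` the element `coactionElt`;
it is the value at `1` of the coaction on `H ⊗ A`. -/
def tensorCoactionElt : (H ⊗[k] A) ⊗[k] H := DT.tensorForm A CA.reassoc

theorem counitLast_tensorCoactionElt :
    QH.counitLast (H ⊗[k] A) (DT.tensorCoactionElt CA) = 1 := by
  rw [tensorCoactionElt, counitLast_tensorForm, CA.onTail_counitHead_reassoc,
    Algebra.TensorProduct.one_def (A := A), QH.rightAct_tmul, QH.Sinv_one]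
  simp [Algebra.TensorProduct.one_def]

theorem reassoc_mul_tensorCoactionHead_tensorForm (u : A ⊗[k] (H ⊗[k] H)) :
    leftLegs H A (H ⊗[k] H) QH.reassoc *
        CA.tensorCoactionHead (DT.tensorCoactionElt CA) (DT.tensorForm A u) =
      DT.tensorForm₃ A (onTail A (onTail H QH.comul) CA.reassoc *
        onHead (H ⊗[k] H) CA.rho u) := by
  obtain ⟨v, rfl⟩ := (TensorProduct.assoc k A H H).surjective u
  induction v using TensorProduct.induction_on with
  | zero => simp
  | add x y hx hy => simp only [map_add, mul_add, hx, hy]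
  | tmul v c =>
    rw [← assocFour_onHead_tmul, tensorForm₃_mul_assocFour_tmul,
      ← leftLegs_mul_appendOne_tensorForm, ← tensorCoactionElt, ← CA.tensorCoactionHead_one,
      tensorForm_assoc_tmul, CA.tensorCoactionHead_mul_rightLegs,
      ← mul_one (leftLegs H A H _), CA.tensorCoactionHead_leftLegs_mul,
      ← mul_assoc, ← mul_assoc, ← map_mul, map_mul (onHead H QH.comul),
      ← mul_assoc QH.reassoc, ← QH.onTail_comul_mul_reassoc, ← QH.comul₃_apply,
      mul_assoc (QH.comul₃ _), map_mul (leftLegs H A (H ⊗[k] H)),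
      mul_assoc (leftLegs H A (H ⊗[k] H) (QH.comul₃ _))]

theorem reassoc_mul_tensorCoactionHead_tensorCoactionElt :
    leftLegs H A (H ⊗[k] H) QH.reassoc *
        CA.tensorCoactionHead (DT.tensorCoactionElt CA) (DT.tensorCoactionElt CA) =
      onTail (H ⊗[k] A) QH.comul (DT.tensorCoactionElt CA) *
        rightLegs H A (H ⊗[k] H) CA.reassoc := by
  calc
    _ = DT.tensorForm₃ A (onTail A (onTail H QH.comul) CA.reassoc *
          onHead (H ⊗[k] H) CA.rho CA.reassoc) :=
      DT.reassoc_mul_tensorCoactionHead_tensorForm CA CA.reassoc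
    _ = DT.tensorForm₃ A (includeRight QH.reassoc * onTail A (onHead H QH.comul) CA.reassoc *
          onTail A (appendOne k H H H) CA.reassoc) := by rw [CA.pentagon_reassoc]
    _ = _ := by
      rw [tensorForm₃_mul_onTail_appendOne, tensorForm₃_includeRight_reassoc_mul,
        tensorCoactionElt]

theorem comul_Sinv_mul_coactionElt_eq_sum (c : H) :
    QH.comul (QH.Sinv c) * DT.coactionElt =
      ∑ l ∈ range QH.nD, ∑ j ∈ range QH.nQ, ∑ t ∈ range DT.nf,
        QH.Sinv (QH.x3 j * QH.D2 c l * DT.g2 t) ⊗ₜ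
          QH.Sinv ((QH.S (QH.x1 j) * QH.aE * QH.x2 j) * QH.D1 c l * DT.g1 t) := by
  rw [coactionElt, ← antipodeInvSwap_mul_comul_mul_twistInv, QuasiHopfAlgebra.qElt,
    QuasiBialgebra.reassocInv, twistInv, QH.hcomul]
  simp only [map_sum, Finset.sum_mul, Finset.mul_sum, QuasiHopfAlgebra.evalHead_tmul,
    Algebra.TensorProduct.tmul_mul_tmul, QuasiHopfAlgebra.antipodeInvSwap_tmul]
  exact sum_rotate_three _ _ _ _

theorem tensorCoaction_tmul_eq_sum (h : H) (a : A) :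
    CA.tensorCoaction (DT.tensorCoactionElt CA) (h ⊗ₜ a) =
      ∑ i ∈ range QH.nD, ∑ s ∈ range CA.nP, ∑ l ∈ range QH.nD, ∑ j ∈ range QH.nQ,
        ∑ t ∈ range DT.nf, ∑ r ∈ range CA.nR,
        ((QH.D1 h i * QH.Sinv (QH.x3 j * QH.D2 (CA.P3 s) l * DT.g2 t)) ⊗ₜ[k]
            (CA.P1 s * CA.r0 a r)) ⊗ₜ[k]
          (QH.D2 h i *
            QH.Sinv ((QH.S (QH.x1 j) * QH.aE * QH.x2 j) * QH.D1 (CA.P3 s) l * DT.g1 t) *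
            (CA.P2 s * CA.r1 a r)) := by
  rw [CA.tensorCoaction_tmul, QH.hcomul, map_sum, Finset.sum_mul, Finset.sum_mul]
  refine Finset.sum_congr rfl fun i _ => ?_
  rw [tensorCoactionElt, RightComoduleAlgebra.reassoc, map_sum, Finset.mul_sum, Finset.sum_mul]
  refine Finset.sum_congr rfl fun s _ => ?_
  rw [← TensorProduct.assoc_tmul, tensorForm_assoc_tmul, comul_Sinv_mul_coactionElt_eq_sum,
    CA.hrho]
  simp only [map_sum, Finset.sum_mul, Finset.mul_sum, leftLegs_tmul, rightLegs_tmul,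
    Algebra.TensorProduct.tmul_mul_tmul, mul_one, one_mul, mul_assoc]
  exact sum_rotate_four _ _ _ _ _

end DrinfeldTwist

/-- Let `H` be a quasi-Hopf algebra and `𝔄` a right `H`-comodule
algebra. Then `𝒰 = H ⊗ 𝔄` is a two-sided `(𝔄,H)`-Hopf module with
`h ≻ (h'⊗a) = hh' ⊗ a`, `(h⊗a) ≺ a' = h ⊗ aa'` and
`ρ(h⊗a) = ∑ h₁S⁻¹(q²_L X̃³₂ g²) ⊗ X̃¹ a⟨0⟩ ⊗ h₂S⁻¹(q¹_L X̃³₁ g¹) X̃² a⟨1⟩`,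
where `q_L = ∑ S(x¹)αx² ⊗ x³` and `f⁻¹ = ∑ g¹ ⊗ g²` is the inverse Drinfeld twist. -/
theorem tensor_H_A_is_two_sided_hopf_module
    {k : Type*} [Field k] {H : Type*} [Ring H] [Algebra k H]
    (QH : QuasiHopfAlgebra k H) (DT : DrinfeldTwist QH)
    {A : Type*} [Ring A] [Algebra k A]
    (CA : RightComoduleAlgebra QH.toQuasiBialgebra A) :
    ∃ T : TwoSidedHopfModule QH.toQuasiBialgebra CA (H ⊗[k] A),
      (∀ (h h' : H) (a : A), T.ha h (h' ⊗ₜ[k] a) = (h * h') ⊗ₜ[k] a) ∧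
      (∀ (a' : A) (h : H) (a : A), T.ra a' (h ⊗ₜ[k] a) = h ⊗ₜ[k] (a * a')) ∧
      (∀ (h : H) (a : A), T.rho (h ⊗ₜ[k] a) =
        ∑ i ∈ Finset.range QH.nD, ∑ s ∈ Finset.range CA.nP, ∑ l ∈ Finset.range QH.nD,
          ∑ j ∈ Finset.range QH.nQ, ∑ t ∈ Finset.range DT.nf, ∑ r ∈ Finset.range CA.nR,
          ((QH.D1 h i * QH.Sinv (QH.x3 j * QH.D2 (CA.P3 s) l * DT.g2 t)) ⊗ₜ[k]
              (CA.P1 s * CA.r0 a r)) ⊗ₜ[k]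
            (QH.D2 h i *
              QH.Sinv ((QH.S (QH.x1 j) * QH.aE * QH.x2 j) * QH.D1 (CA.P3 s) l * DT.g1 t) *
              (CA.P2 s * CA.r1 a r))) := by
  refine ⟨CA.tensorHopfModule (DT.counitLast_tensorCoactionElt CA)
      (DT.reassoc_mul_tensorCoactionHead_tensorCoactionElt CA),
    fun h h' a => ?_, fun a' h a => ?_, fun h a => DT.tensorCoaction_tmul_eq_sum CA h a⟩
  · simp [RightComoduleAlgebra.tensorHopfModule]
  · simp [RightComoduleAlgebra.tensorHopfModule]
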